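/- arXiv:2006.13102 — 2 statements merged into one kernel-verified Lean document; each statement's English description precedes it below -/
import Mathlib

section
/- Let 0 ≤ k < m and let ψ^k ∈ C^∞(ℝⁿ×(ℝⁿ∖{0})) satisfy: (i) J_{i₁j₁} ⋯ J_{i_{m+1}j_{m+1}} ψ^k = 0 for all indices 1 ≤ i₁,j₁,…,i_{m+1},j_{m+1} ≤ n, and (ii) ψ^k(x,tξ) = (t^{m−k}/|t|) ψ^k(x,ξ) for all real t ≠ 0. For 0 ≤ p ≤ k define ψ^p = ((−1)^{k−p}/(C(k,p)(k−p)!)) ⟨ξ,∂_x⟩^{k−p} ψ^k, and for 0 ≤ ℓ ≤ k and indices 1 ≤ i₁,…,i_ℓ ≤ n define Ψ_{i₁…i_ℓ} = ((m−ℓ)!/m!) σ(i₁,…,i_ℓ) Σ_{p=0}^ℓ (−1)^p C(ℓ,p) ∂^ℓ ψ^p/(∂x^{i₁}⋯∂x^{i_p} ∂ξ^{i_{p+1}}⋯∂ξ^{i_ℓ}). Then Ψ_{i₁…i_ℓ} satisfies the (m−ℓ+1)-fold John equations: J_{i'₁j'₁} ⋯ J_{i'_{m−ℓ+1}j'_{m−ℓ+1}}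 Ψ_{i₁…i_ℓ} = 0 for all indices 1 ≤ i'₁,j'₁,…,i'_{m−ℓ+1},j'_{m−ℓ+1} ≤ n. -/
noncomputable section

open MeasureTheory Filter
open scoped RealInnerProductSpace BigOperators

/-- `ℝⁿ` with the Euclidean structure. -/
abbrev En (n : ℕ) := EuclideanSpace ℝ (Fin n)

/-- A symmetric `m`-tensor on `ℝⁿ` (pointwise): a family of reals indexed by
`(i₁,…,i_m)`, invariant under permutations of the indices. -/
def IsSymTensor {n m : ℕ} (F : (Fin m → Fin n) → ℝ) : Prop :=
  ∀ (π : Equiv.Perm (Fin m)) (i : Fin m → Fin n), F (i ∘ π) = F i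

/-- A symmetric `m`-tensor field on `ℝⁿ`. -/
def IsSymField {n m : ℕ} (f : (Fin m → Fin n) → En n → ℝ) : Prop :=
  ∀ (π : Equiv.Perm (Fin m)) (i : Fin m → Fin n), f (i ∘ π) = f i

/-- All components of the field are Schwartz functions. -/
def IsSchwartzField {n m : ℕ} (f : (Fin m → Fin n) → En n → ℝ) : Prop :=
  ∀ i, ∃ φ : SchwartzMap (En n) ℝ, ⇑φ = f i

/-- Symmetrization `σ` of a tensor: average over all permutations of the indices. -/
def symz {n m : ℕ} {α : Type*} [AddCommMonoid α] [Module ℝ α]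
    (F : (Fin m → Fin n) → α) : (Fin m → Fin n) → α :=
  fun i => ((m.factorial : ℝ))⁻¹ • ∑ π : Equiv.Perm (Fin m), F (i ∘ π)

/-- The `q`-th momentum ray transform
`(J^q f)(x,ξ) = ∫ t^q f_{i₁…i_m}(x+tξ) ξ^{i₁}⋯ξ^{i_m} dt`, as a function on all of
`ℝⁿ × ℝⁿ`; its restriction to `TSⁿ⁻¹ = {|ξ|=1, ⟨x,ξ⟩=0}` is `I^q f`. -/
def momRT {n m : ℕ} (q : ℕ) (f : (Fin m → Fin n) → En n → ℝ) (x ξ : En n) : ℝ :=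
  ∫ t : ℝ, t ^ q * ∑ i : Fin m → Fin n, f i (x + t • ξ) * ∏ r, ξ (i r)

/-- Coordinate partial derivative `∂/∂x^j`. -/
def pd {n : ℕ} (j : Fin n) (u : En n → ℝ) : En n → ℝ :=
  fun x => fderiv ℝ u x (EuclideanSpace.single j 1)

/-- Inner differentiation (symmetrized derivative) `d`. -/
def dsym {n m : ℕ} (u : (Fin m → Fin n) → En n → ℝ) :
    (Fin (m + 1) → Fin n) → En n → ℝ :=
  symz (fun i => pd (i (Fin.last m)) (u (fun s => i s.castSucc)))

/-- Iterated inner differentiation `d^k`. -/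
def dpow {n m : ℕ} : (k : ℕ) → ((Fin m → Fin n) → En n → ℝ) →
    (Fin (m + k) → Fin n) → En n → ℝ
  | 0, u => u
  | k + 1, u => dsym (dpow k u)

/-- Divergence `δ`. -/
def divg {n m : ℕ} (u : (Fin (m + 1) → Fin n) → En n → ℝ) :
    (Fin m → Fin n) → En n → ℝ :=
  fun i x => ∑ j : Fin n, pd j (u (Fin.snoc i j)) x

/-- Iterated divergence `δ^k`. -/
def divpow {n : ℕ} : (k : ℕ) → {p : ℕ} → ((Fin (p + k) → Fin n) → En n → ℝ) →
    (Fin p → Fin n) → En n → ℝ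
  | 0, _, u => u
  | k + 1, _, u => divpow k (divg u)

/-- Partial derivative `∂/∂x^j` in the first slot of a function of `(x, ξ)`. -/
def pdx {n : ℕ} (j : Fin n) (F : En n → En n → ℝ) : En n → En n → ℝ :=
  fun x ξ => fderiv ℝ (fun x' => F x' ξ) x (EuclideanSpace.single j 1)

/-- Partial derivative `∂/∂ξ^j` in the second slot of a function of `(x, ξ)`. -/
def pdxi {n : ℕ} (j : Fin n) (F : En n → En n → ℝ) : En n → En n → ℝ :=
  fun x ξ => fderiv ℝ (fun ξ' => F x ξ') ξ (EuclideanSpace.single j 1)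

/-- Iterated `∂x` derivatives along a list of indices. -/
def pdxList {n : ℕ} (l : List (Fin n)) (F : En n → En n → ℝ) : En n → En n → ℝ :=
  l.foldr pdx F

/-- Iterated `∂ξ` derivatives along a list of indices. -/
def pdxiList {n : ℕ} (l : List (Fin n)) (F : En n → En n → ℝ) : En n → En n → ℝ :=
  l.foldr pdxi F

/-- The John operator `J_{ij} = ∂²/∂x^i∂ξ^j − ∂²/∂x^j∂ξ^i`. -/
def johnOp {n : ℕ} (i j : Fin n) (F : En n → En n → ℝ) : En n → En n → ℝ :=
  fun x ξ => pdx i (pdxi j F) x ξ - pdx j (pdxi i F) x ξ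

/-- Iterated John operators `J_{i₁j₁} ⋯ J_{i_r j_r}`. -/
def johnIter {n : ℕ} (l : List (Fin n × Fin n)) (F : En n → En n → ℝ) : En n → En n → ℝ :=
  l.foldr (fun ij G => johnOp ij.1 ij.2 G) F

/-- Sharafutdinov's Schwartz space `𝒮(TSⁿ⁻¹)`: a function on
`TSⁿ⁻¹ = {(x,ξ) : |ξ|=1, ⟨x,ξ⟩=0}` is Schwartz iff it is the restriction of a
Schwartz function on `ℝⁿ × ℝⁿ`. -/
def IsSchwartzOnTS {n : ℕ} (φ : En n → En n → ℝ) : Prop :=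
  ∃ Φ : SchwartzMap (En n × En n) ℝ, ∀ x ξ : En n, ‖ξ‖ = 1 → ⟪x, ξ⟫ = 0 → φ x ξ = Φ (x, ξ)

/-- Symmetric multiplication `i_{x^{⊗k}} : S^m → S^{m+k}`. -/
def iPowTens {n m k : ℕ} (x : En n) (V : (Fin m → Fin n) → ℝ) :
    (Fin (m + k) → Fin n) → ℝ :=
  symz (fun i => (∏ r : Fin k, x (i (Fin.natAdd m r))) * V (fun s => i (Fin.castAdd k s)))

/-- Convolution (contraction) `j_{x^{⊗k}} : S^{m+k} → S^m`. -/
def jPowTens {n m k : ℕ} (x : En n) (F : (Fin (m + k) → Fin n) → ℝ) :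
    (Fin m → Fin n) → ℝ :=
  fun i => ∑ j : Fin k → Fin n, (∏ r, x (j r)) * F (Fin.append i j)

/-- Directional derivative `⟨ξ, ∂_x⟩` in the first slot, along the second
argument. -/
def dirx {n : ℕ} (F : En n → En n → ℝ) : En n → En n → ℝ :=
  fun x ξ => fderiv ℝ (fun x' => F x' ξ) x ξ


/-- commutation relations -/
structure WeylOps {n : ℕ} {M : Type*} [AddCommGroup M] [Module ℝ M]
    (X Y Z : Fin n → Module.End ℝ M) : Prop where
  xx : ∀ i j, X i * X j = X j * X i
  yx : ∀ i j, Y i * X j = X j * Y i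
  yy : ∀ i j, Y i * Y j = Y j * Y i
  xz : ∀ i j, X i * Z j = Z j * X i
  zz : ∀ i j, Z i * Z j = Z j * Z i
  yz : ∀ i j, Y i * Z j = Z j * Y i + if i = j then 1 else 0

namespace WeylOps
variable {n : ℕ} {M : Type*} [AddCommGroup M] [Module ℝ M]

/-- John -/
def J (X Y : Fin n → Module.End ℝ M) (i j : Fin n) : Module.End ℝ M := X i * Y j - X j * Y i
/-- sum Z A -/
def C (Z A : Fin n → Module.End ℝ M) : Module.End ℝ M := ∑ j, Z j * A j
/-- products of John operators -/
def P (X Y : Fin n → Module.End ℝ M) (L : List (Fin n × Fin n)) : Module.End ℝ M :=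
  (L.map (fun q => J X Y q.1 q.2)).prod

variable {X Y Z : Fin n → Module.End ℝ M}

lemma J_X (h : WeylOps X Y Z) (a b i : Fin n) : J X Y a b * X i = X i * J X Y a b := by
  simp only [J, sub_mul, mul_sub, mul_assoc, h.yx]
  simp only [← mul_assoc, h.xx i]

lemma J_Y (h : WeylOps X Y Z) (a b i : Fin n) : J X Y a b * Y i = Y i * J X Y a b := by
  simp only [J, sub_mul, mul_sub, mul_assoc, h.yy _ i]
  simp only [← mul_assoc, h.yx i]

lemma J_J (h : WeylOps X Y Z) (a b c d : Fin n) : J X Y a b * J X Y c d = J X Y c d * J X Y a b := by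
  conv_lhs => rw [J.eq_1 X Y c d]
  conv_rhs => rw [J.eq_1 X Y c d]
  rw [mul_sub, sub_mul, ← mul_assoc, ← mul_assoc, h.J_X, h.J_X, mul_assoc, mul_assoc, h.J_Y,
    h.J_Y]
  simp only [mul_assoc]

lemma J_Z (h : WeylOps X Y Z) (a b j : Fin n) : J X Y a b * Z j =
    Z j * J X Y a b + ((if b = j then X a else 0) - (if a = j then X b else 0)) := by
  simp only [J, sub_mul, mul_sub, mul_assoc, h.yz, mul_add]
  simp only [← mul_assoc, h.xz, mul_ite, mul_one, mul_zero]
  abel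

lemma Y_D (h : WeylOps X Y Z) (i : Fin n) : Y i * C Z X = C Z X * Y i + X i := by
  simp only [C, Finset.mul_sum, Finset.sum_mul, ← mul_assoc, h.yz, add_mul, ite_mul, one_mul,
    zero_mul, Finset.sum_add_distrib, Finset.sum_ite_eq, Finset.mem_univ, if_true]
  simp only [mul_assoc, h.yx]

lemma X_D (h : WeylOps X Y Z) (i : Fin n) : X i * C Z X = C Z X * X i := by
  simp only [C, Finset.mul_sum, Finset.sum_mul, ← mul_assoc, h.xz]
  simp only [mul_assoc, h.xx i]

lemma X_E (h : WeylOps X Y Z) (i : Fin n) : X i * C Z Y = C Z Y * X i := by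
  simp only [C, Finset.mul_sum, Finset.sum_mul, ← mul_assoc, h.xz]
  simp only [mul_assoc, h.yx _ i]

lemma Y_E (h : WeylOps X Y Z) (i : Fin n) : Y i * C Z Y = C Z Y * Y i + Y i := by
  simp only [C, Finset.mul_sum, Finset.sum_mul, ← mul_assoc, h.yz, add_mul, ite_mul, one_mul,
    zero_mul, Finset.sum_add_distrib, Finset.sum_ite_eq, Finset.mem_univ, if_true]
  simp only [mul_assoc, h.yy i]

lemma Z_D (h : WeylOps X Y Z) (i : Fin n) : Z i * C Z X = C Z X * Z i := by
  simp only [C, Finset.mul_sum, Finset.sum_mul, mul_assoc, h.xz]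
  simp only [← mul_assoc, h.zz i]

lemma E_D (h : WeylOps X Y Z) : C Z Y * C Z X = C Z X * C Z Y + C Z X := by
  conv_lhs => rw [C.eq_1 Z Y]
  simp only [Finset.sum_mul, mul_assoc, h.Y_D, mul_add, Finset.sum_add_distrib]
  simp only [← mul_assoc, h.Z_D]
  congr 1
  conv_rhs => rw [C.eq_1 Z Y]
  simp only [Finset.mul_sum, mul_assoc]

lemma J_D (h : WeylOps X Y Z) (a b : Fin n) : J X Y a b * C Z X = C Z X * J X Y a b := by
  simp only [J, sub_mul, mul_sub, mul_assoc, h.Y_D, mul_add]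
  simp only [← mul_assoc, h.X_D, h.xx a b]
  abel

lemma W_eq (h : WeylOps X Y Z) (i : Fin n) : C Z (fun j => J X Y i j) = X i * C Z Y - C Z X * Y i := by
  simp only [C, J, mul_sub, Finset.mul_sum, Finset.sum_mul, Finset.sum_sub_distrib, ← mul_assoc,
    h.xz]

lemma bianchi (h : WeylOps X Y Z) (a b i : Fin n) :
    X a * J X Y i b - X b * J X Y i a = X i * J X Y a b := by
  simp only [J, mul_sub, ← mul_assoc, h.xx a i, h.xx b i, h.xx b a]
  abel

lemma J_W (h : WeylOps X Y Z) (a b i : Fin n) : J X Y a b * C Z (fun j => J X Y i j) =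
    C Z (fun j => J X Y i j) * J X Y a b + X i * J X Y a b := by
  rw [← h.bianchi a b i]
  simp only [C, Finset.mul_sum, Finset.sum_mul, ← mul_assoc, h.J_Z, add_mul, sub_mul, ite_mul,
    zero_mul, Finset.sum_add_distrib, Finset.sum_sub_distrib, Finset.sum_ite_eq, Finset.mem_univ,
    if_true]
  simp only [mul_assoc, h.J_J a b]

lemma P_comm (A : Module.End ℝ M) (hA : ∀ a b, J X Y a b * A = A * J X Y a b)
    (L : List (Fin n × Fin n)) : P X Y L * A = A * P X Y L := by
  induction L with
  | nil => simp [P]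
  | cons q L ih =>
    have : P X Y (q :: L) = J X Y q.1 q.2 * P X Y L := by simp [P]
    rw [this, mul_assoc, ih, ← mul_assoc, hA, mul_assoc]

lemma P_W (h : WeylOps X Y Z) (L : List (Fin n × Fin n)) (i : Fin n) : P X Y L * C Z (fun j => J X Y i j) =
    C Z (fun j => J X Y i j) * P X Y L + (L.length : ℝ) • (X i * P X Y L) := by
  induction L with
  | nil => simp [P]
  | cons q L ih =>
    have : P X Y (q :: L) = J X Y q.1 q.2 * P X Y L := by simp [P]
    rw [this, mul_assoc, ih, mul_add, ← mul_assoc, h.J_W, mul_smul_comm, ← mul_assoc _ (X i),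
      h.J_X, List.length_cons]
    push_cast
    simp only [add_mul, add_smul, mul_assoc, one_smul]
    abel

/-- Momentum data of rank `m`. -/
structure Good (X Y Z : Fin n → Module.End ℝ M) (m : ℝ) (N k : ℕ) (u : ℕ → M) : Prop where
  dd : ∀ p, p < k → C Z X (u (p + 1)) = -((p : ℝ) + 1) • u p
  ee : ∀ p, p ≤ k → C Z Y (u p) = (m - p - 1) • u p
  jj : ∀ p, p ≤ k → ∀ L : List (Fin n × Fin n), L.length = N → P X Y L (u p) = 0

/-- The step -/
def step (X Y : Fin n → Module.End ℝ M) (i : Fin n) (u : ℕ → M) : ℕ → M :=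
  fun p => Y i (u p) - X i (u (p + 1))

lemma good_step (h : WeylOps X Y Z) {N k : ℕ} {u : ℕ → M} (g : Good X Y Z ((N : ℝ) + 1) (N + 2) (k + 1) u)
    (i : Fin n) : Good X Y Z N (N + 1) k (step X Y i u) := by
  have YD := fun v => LinearMap.congr_fun (h.Y_D i) v
  have XD := fun v => LinearMap.congr_fun (h.X_D i) v
  have YE := fun v => LinearMap.congr_fun (h.Y_E i) v
  have XE := fun v => LinearMap.congr_fun (h.X_E i) v
  simp only [Module.End.mul_apply, LinearMap.add_apply] at YD XD YE XE
  refine ⟨?_, ?_, ?_⟩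
  · intro p hp
    have h1 := YD (u (p + 1))
    have h2 := XD (u (p + 2))
    rw [g.dd p (by omega)] at h1
    rw [g.dd (p + 1) (by omega)] at h2
    simp only [step, map_sub, ← h2]
    rw [eq_sub_of_add_eq h1.symm]
    simp only [map_smul]
    push_cast
    module
  · intro p hp
    have h1 := YE (u p)
    have h2 := XE (u (p + 1))
    rw [g.ee p (by omega)] at h1
    rw [g.ee (p + 1) (by omega)] at h2
    simp only [step, map_sub, ← h2]
    rw [eq_sub_of_add_eq h1.symm]
    simp only [map_smul]
    push_cast
    module
  · intro p hp L hL
    have hW := LinearMap.congr_fun (h.W_eq i) (u (p + 1))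
    have hPW := LinearMap.congr_fun (h.P_W L i) (u (p + 1))
    have hPX := LinearMap.congr_fun (P_comm (X i) (fun a b => h.J_X a b i) L) (u (p + 1))
    have h1 := YD (u (p + 1))
    rw [g.dd p (by omega)] at h1
    simp only [Module.End.mul_apply, LinearMap.add_apply, LinearMap.sub_apply,
      LinearMap.smul_apply] at hW hPW hPX
    rw [g.ee (p + 1) (by omega), eq_sub_of_add_eq h1.symm] at hW
    have hz : C Z (fun j => J X Y i j) (P X Y L (u (p + 1))) = 0 := by
      simp only [C, LinearMap.sum_apply, Module.End.mul_apply]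
      refine Finset.sum_eq_zero fun j _ => ?_
      have := g.jj (p + 1) (by omega) ((i, j) :: L) (by simp [hL])
      have h3 : P X Y ((i, j) :: L) = J X Y i j * P X Y L := by simp [P]
      rw [h3, Module.End.mul_apply] at this
      rw [this, map_zero]
    rw [hz, hW, hL, zero_add, ← hPX] at hPW
    have h4 : ((p : ℝ) + 1) • P X Y L (step X Y i u p) = 0 := by
      simp only [step, map_sub, map_smul] at hPW ⊢
      push_cast at hPW
      have := sub_eq_zero.mpr hPW
      rw [← this]
      module
    exact (smul_eq_zero.mp h4).resolve_left (by positivity)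

/-- iterated step -/
def steps (X Y : Fin n → Module.End ℝ M) (l : List (Fin n)) (u : ℕ → M) : ℕ → M :=
  l.foldr (step X Y) u

lemma good_steps (h : WeylOps X Y Z) (l : List (Fin n)) {N k : ℕ} {u : ℕ → M}
    (g : Good X Y Z ((N + l.length : ℕ) : ℝ) (N + l.length + 1) (k + l.length) u) :
    Good X Y Z N (N + 1) k (steps X Y l u) := by
  induction l generalizing N k with
  | nil => simpa [steps] using g
  | cons i l ih =>
    have e1 : N + (i :: l).length = N + 1 + l.length := by simp; omega
    have e2 : k + (i :: l).length = k + 1 + l.length := by simp; omega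
    rw [e1, e2] at g
    have := ih g
    push_cast at this
    exact h.good_step this i

lemma good_init (h : WeylOps X Y Z) (m k : ℕ) (v : M) (hE : C Z Y v = ((m : ℝ) - k - 1) • v)
    (hP : ∀ L : List (Fin n × Fin n), L.length = m + 1 → P X Y L v = 0) :
    Good X Y Z m (m + 1) k (fun p => ((-1 : ℝ) ^ (k - p) /
      ((k.choose p) * ((k - p).factorial) : ℝ)) • ((C Z X) ^ (k - p)) v) := by
  refine ⟨?_, ?_, ?_⟩
  · intro p hp
    obtain ⟨r, rfl⟩ : ∃ r, k = p + 1 + r := ⟨k - (p + 1), by omega⟩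
    have e1 : p + 1 + r - (p + 1) = r := by omega
    have e2 : p + 1 + r - p = r + 1 := by omega
    simp only [e1, e2, map_smul, pow_succ' (C Z X), Module.End.mul_apply, smul_smul]
    congr 1
    have hc := Nat.choose_succ_right_eq (p + 1 + r) p
    rw [e2] at hc
    have hc' : ((p + 1 + r).choose (p + 1) : ℝ) * (p + 1) = (p + 1 + r).choose p * (r + 1) := by
      exact_mod_cast hc
    have h1 : ((p + 1 + r).choose (p + 1) : ℝ) ≠ 0 := by
      exact_mod_cast (Nat.choose_pos (by omega)).ne'
    have h2 : ((p + 1 + r).choose p : ℝ) ≠ 0 := by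
      exact_mod_cast (Nat.choose_pos (by omega)).ne'
    have h3 : (r.factorial : ℝ) ≠ 0 := by positivity
    rw [Nat.factorial_succ]
    push_cast
    have h4 : (r : ℝ) + 1 ≠ 0 := by positivity
    rw [pow_succ]
    field_simp
    linear_combination -hc'
  · intro p hp
    have key : ∀ r : ℕ, C Z Y (((C Z X) ^ r) v) = ((m : ℝ) - k - 1 + r) • ((C Z X) ^ r) v := by
      intro r
      induction r with
      | zero => simp [hE]
      | succ r ih =>
        have := LinearMap.congr_fun h.E_D (((C Z X) ^ r) v)
        simp only [Module.End.mul_apply, LinearMap.add_apply] at this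
        rw [pow_succ', Module.End.mul_apply, this, ih, map_smul]
        push_cast
        module
    have hh : (m : ℝ) - k - 1 + ((k - p : ℕ) : ℝ) = m - p - 1 := by
      push_cast [Nat.cast_sub hp]
      ring
    simp only [map_smul, key, hh]
    rw [smul_comm]
  · intro p hp L hL
    have hD : ∀ a b, J X Y a b * C Z X ^ (k - p) = C Z X ^ (k - p) * J X Y a b := fun a b =>
      (show Commute _ _ from h.J_D a b).pow_right _
    have := LinearMap.congr_fun (P_comm _ hD L) v
    simp only [Module.End.mul_apply] at this
    rw [map_smul, this, hP L hL, map_zero, smul_zero]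

end WeylOps

lemma sym_prod {R : Type*} [CommRing R] (l : ℕ) (a b : Fin l → R) :
    (l.factorial : R) * ∏ s, (b s + a s) = ∑ π : Equiv.Perm (Fin l), ∑ p ∈ Finset.range (l + 1),
      (l.choose p : R) * ((∏ s with s.val < p, b (π s)) * ∏ s with ¬ s.val < p, a (π s)) := by
  classical
  have inv : ∀ π : Equiv.Perm (Fin l), ∏ s, (b s + a s) =
      ∑ A : Finset (Fin l), (∏ s ∈ A, b (π s)) * ∏ s ∈ Aᶜ, a (π s) := by
    intro π
    rw [← Equiv.prod_comp π, Finset.prod_add]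
    simp [Finset.compl_eq_univ_sdiff]
  have h1 : (l.factorial : R) * ∏ s, (b s + a s) =
      ∑ A : Finset (Fin l), ∑ π : Equiv.Perm (Fin l), (∏ s ∈ A, b (π s)) * ∏ s ∈ Aᶜ, a (π s) := by
    rw [Finset.sum_comm, ← Finset.sum_congr rfl (fun π _ => inv π)]
    simp [Fintype.card_perm]
  have indep : ∀ A B : Finset (Fin l), A.card = B.card →
      ∑ π : Equiv.Perm (Fin l), (∏ s ∈ A, b (π s)) * ∏ s ∈ Aᶜ, a (π s) =
      ∑ π : Equiv.Perm (Fin l), (∏ s ∈ B, b (π s)) * ∏ s ∈ Bᶜ, a (π s) := by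
    intro A B hAB
    let e : {x // x ∈ A} ≃ {x // x ∈ B} := Finset.equivOfCardEq hAB
    let τ : Equiv.Perm (Fin l) := e.extendSubtype
    have hτ : A.map τ.toEmbedding = B := by
      apply Finset.eq_of_subset_of_card_le
      · intro x hx
        obtain ⟨y, hy, rfl⟩ := Finset.mem_map.mp hx
        exact e.extendSubtype_mem y hy
      · simp [hAB]
    have hτc : Aᶜ.map τ.toEmbedding = Bᶜ := by
      rw [← hτ]; ext x; simp
    rw [← Equiv.sum_comp (Equiv.mulRight τ)]
    refine Finset.sum_congr rfl fun π _ => ?_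
    rw [← hτc, ← hτ]
    simp [Finset.prod_map]
  rw [h1, Finset.sum_comm (s := (Finset.univ : Finset (Equiv.Perm (Fin l)))) (t := Finset.range (l + 1))]
  have hcard : ∀ p ∈ Finset.range (l + 1), (Finset.univ.filter (fun s : Fin l => s.val < p)).card = p := by
    intro p hp
    rw [Fin.card_filter_val_lt]
    simp at hp; omega
  rw [← Finset.powerset_univ, Finset.sum_powerset, Finset.card_univ, Fintype.card_fin]
  refine Finset.sum_congr rfl fun p hp => ?_
  rw [Finset.sum_congr rfl (fun A hA => indep A (Finset.univ.filter (fun s : Fin l => s.val < p))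
    (by rw [hcard p hp]; exact (Finset.mem_powersetCard.mp hA).2))]
  rw [Finset.sum_const, Finset.card_powersetCard, Finset.card_univ, Fintype.card_fin, nsmul_eq_mul,
    Finset.mul_sum]
  simp [Finset.compl_filter]

lemma prod_take {R : Type*} [CommRing R] (l p : ℕ) (f : Fin l → R) :
    (((List.finRange l).take p).map f).prod = ∏ s with s.val < p, f s := by
  classical
  rw [← List.prod_toFinset _ ((List.nodup_finRange l).sublist (List.take_sublist _ _))]
  congr 1
  ext s
  simp only [List.mem_toFinset, Finset.mem_filter, Finset.mem_univ, true_and, List.mem_take_iff_getElem]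
  constructor
  · rintro ⟨i, hi, rfl⟩
    simp at hi ⊢; omega
  · intro hs
    exact ⟨s.val, by simpa using hs, by simp⟩

lemma prod_drop {R : Type*} [CommRing R] (l p : ℕ) (f : Fin l → R) :
    (((List.finRange l).drop p).map f).prod = ∏ s with ¬ s.val < p, f s := by
  classical
  rw [← List.prod_toFinset _ ((List.nodup_finRange l).sublist (List.drop_sublist _ _))]
  congr 1
  ext s
  simp only [List.mem_toFinset, Finset.mem_filter, Finset.mem_univ, true_and, List.mem_drop_iff_getElem]
  constructor
  · rintro ⟨i, hi, rfl⟩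
    simp at hi ⊢
  · intro hs
    exact ⟨s.val - p, by simp; omega, by ext; simp; omega⟩

lemma sym_prod_list {R : Type*} [CommRing R] (l : ℕ) (a b : Fin l → R) :
    (l.factorial : R) * ((List.finRange l).map (fun s => b s + a s)).prod =
    ∑ π : Equiv.Perm (Fin l), ∑ p ∈ Finset.range (l + 1),
      (l.choose p : R) * ((((List.finRange l).take p).map (fun s => b (π s))).prod *
        (((List.finRange l).drop p).map (fun s => a (π s))).prod) := by
  have h1 : ((List.finRange l).map (fun s => b s + a s)).prod = ∏ s, (b s + a s) := by
    rw [← List.ofFn_eq_map, List.prod_ofFn]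
  rw [h1, sym_prod]
  simp only [prod_take, prod_drop]

lemma sym_prod_nc {R : Type*} [Ring R] [Algebra ℝ R] (l : ℕ) (a b : Fin l → R)
    (haa : ∀ s t, a s * a t = a t * a s) (hab : ∀ s t, a s * b t = b t * a s)
    (hbb : ∀ s t, b s * b t = b t * b s) :
    (l.factorial : R) * ((List.finRange l).map (fun s => b s + a s)).prod =
    ∑ π : Equiv.Perm (Fin l), ∑ p ∈ Finset.range (l + 1),
      (l.choose p : R) * ((((List.finRange l).take p).map (fun s => b (π s))).prod *
        (((List.finRange l).drop p).map (fun s => a (π s))).prod) := by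
  let S : Set R := Set.range a ∪ Set.range b
  have hS : ∀ x ∈ S, ∀ y ∈ S, x * y = y * x := by
    rintro _ (⟨s, rfl⟩ | ⟨s, rfl⟩) _ (⟨t, rfl⟩ | ⟨t, rfl⟩)
    · exact haa s t
    · exact hab s t
    · exact (hab t s).symm
    · exact hbb s t
  have hcomm := Algebra.isMulCommutative_adjoin ℝ hS
  let _ : CommRing (Algebra.adjoin ℝ S) :=
    { (inferInstance : Ring (Algebra.adjoin ℝ S)) with
      mul_comm := fun x y => hcomm.is_comm.comm x y }
  let a' : Fin l → Algebra.adjoin ℝ S := fun s =>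
    ⟨a s, Algebra.subset_adjoin (Or.inl ⟨s, rfl⟩)⟩
  let b' : Fin l → Algebra.adjoin ℝ S := fun s =>
    ⟨b s, Algebra.subset_adjoin (Or.inr ⟨s, rfl⟩)⟩
  have := congrArg (Algebra.adjoin ℝ S).val (sym_prod_list l a' b')
  simp only [map_mul, map_sum, map_natCast, map_list_prod, List.map_map, Function.comp_def,
    a', b', Subalgebra.coe_val] at this
  exact this

namespace WeylOps
variable {n : ℕ} {M : Type*} [AddCommGroup M] [Module ℝ M]
variable {X Y Z : Fin n → Module.End ℝ M}

/-- pointwise action on sequences -/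
def seqA (A : Module.End ℝ M) : Module.End ℝ (ℕ → M) where
  toFun u := fun p => A (u p)
  map_add' u v := by ext p; simp
  map_smul' c u := by ext p; simp

/-- minus action with shift -/
def seqB (A : Module.End ℝ M) : Module.End ℝ (ℕ → M) where
  toFun u := fun p => - A (u (p + 1))
  map_add' u v := by ext p; simp; abel
  map_smul' c u := by ext p; simp

lemma steps_eq (l : List (Fin n)) (u : ℕ → M) :
    steps X Y l u = (l.map (fun i => seqB (X i) + seqA (Y i))).prod u := by
  induction l with
  | nil => simp [steps]
  | cons i l ih =>
    have : steps X Y (i :: l) u = step X Y i (steps X Y l u) := rfl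
    rw [this, ih, List.map_cons, List.prod_cons, Module.End.mul_apply]
    ext p
    simp [step, seqA, seqB]
    abel

lemma prod_seqA (l : List (Fin n)) (u : ℕ → M) (p : ℕ) :
    (l.map (fun i => seqA (Y i))).prod u p = (l.map Y).prod (u p) := by
  induction l with
  | nil => simp
  | cons i l ih => simp [seqA, ← ih]

lemma prod_seqB (l : List (Fin n)) (u : ℕ → M) (p : ℕ) :
    (l.map (fun i => seqB (X i))).prod u p =
      (-1 : ℝ) ^ l.length • (l.map X).prod (u (p + l.length)) := by
  induction l generalizing p with
  | nil => simp
  | cons i l ih =>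
    simp only [List.map_cons, List.prod_cons, Module.End.mul_apply, List.length_cons]
    rw [show p + (l.length + 1) = p + 1 + l.length by ring, pow_succ, mul_smul, smul_comm]
    rw [show ∀ w : ℕ → M, seqB (X i) w p = - X i (w (p + 1)) from fun _ => rfl, ih]
    simp

lemma steps_sym (h : WeylOps X Y Z) (l : ℕ) (idx : Fin l → Fin n) (u : ℕ → M) :
    (l.factorial : ℝ) • steps X Y ((List.finRange l).map idx) u 0 =
    ∑ π : Equiv.Perm (Fin l), ∑ p ∈ Finset.range (l + 1),
      ((-1 : ℝ) ^ p * (l.choose p : ℝ)) •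
        (((((List.finRange l).take p).map (fun s => idx (π s))).map X).prod
        (((((List.finRange l).drop p).map (fun s => idx (π s))).map Y).prod (u p))) := by
  have key := sym_prod_nc l (fun s => seqA (Y (idx s))) (fun s => seqB (X (idx s)))
    (fun s t => by
      ext u p; exact LinearMap.congr_fun (h.yy (idx s) (idx t)) (u p))
    (fun s t => by
      ext u p
      have := LinearMap.congr_fun (h.yx (idx s) (idx t)) (u (p + 1))
      simp [seqA, seqB] at this ⊢
      exact this)
    (fun s t => by
      ext u p
      have := LinearMap.congr_fun (h.xx (idx s) (idx t)) (u (p + 1 + 1))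
      simp [seqB] at this ⊢
      exact this)
  have key2 := congrFun (LinearMap.congr_fun key u) 0
  rw [steps_eq]
  simp only [List.map_map, Function.comp_def, LinearMap.sum_apply, Finset.sum_apply,
    Module.End.mul_apply, Module.End.natCast_apply, Pi.smul_apply] at key2 ⊢
  rw [Nat.cast_smul_eq_nsmul, key2]
  refine Finset.sum_congr rfl fun π _ => Finset.sum_congr rfl fun p hp => ?_
  have e1 := prod_seqB (X := X) (((List.finRange l).take p).map (fun s => idx (π s)))
    ((((List.finRange l).drop p).map (fun s => seqA (Y (idx (π s))))).prod u) 0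
  have e2 := prod_seqA (Y := Y) (((List.finRange l).drop p).map (fun s => idx (π s))) u p
  have hlen : (((List.finRange l).take p).map (fun s => idx (π s))).length = p := by
    simp at hp ⊢; omega
  rw [hlen, zero_add] at e1
  simp only [List.map_map, Function.comp_def] at e1 e2
  rw [e1, e2, mul_comm, mul_smul, Nat.cast_smul_eq_nsmul]

end WeylOps

/-- zero set complement -/
def UU (n : ℕ) : Set (En n × En n) := {q | q.2 ≠ 0}

lemma isOpen_UU (n : ℕ) : IsOpen (UU n) := isOpen_ne.preimage continuous_snd

/-- smooth functions off `ξ = 0`, extended by zero -/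
def SM (n : ℕ) : Submodule ℝ (En n × En n → ℝ) where
  carrier := {f | ContDiffOn ℝ (⊤ : ℕ∞) f (UU n) ∧ ∀ q, q.2 = 0 → f q = 0}
  add_mem' := by
    rintro f g ⟨hf, hf0⟩ ⟨hg, hg0⟩
    exact ⟨hf.add hg, fun q hq => by simp [hf0 q hq, hg0 q hq]⟩
  zero_mem' := ⟨contDiffOn_const, fun _ _ => rfl⟩
  smul_mem' := by
    rintro c f ⟨hf, hf0⟩
    exact ⟨hf.const_smul c, fun q hq => by simp [hf0 q hq]⟩

open Classical in
/-- truncation -/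
def trunc {n : ℕ} (f : En n × En n → ℝ) (hf : ContDiffOn ℝ (⊤ : ℕ∞) f (UU n)) : SM n :=
  ⟨fun q => if q.2 = 0 then 0 else f q,
    hf.congr (fun q hq => by simp only [if_neg (show ¬ q.2 = 0 from hq)]),
    fun q hq => by simp [hq]⟩

lemma trunc_apply {n : ℕ} (f : En n × En n → ℝ) (hf : ContDiffOn ℝ (⊤ : ℕ∞) f (UU n))
    {q : En n × En n} (hq : q.2 ≠ 0) : (trunc f hf).1 q = f q := by
  simp [trunc, hq]

lemma SM.ext' {n : ℕ} {f g : SM n} (h : ∀ q : En n × En n, q.2 ≠ 0 → f.1 q = g.1 q) : f = g := by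
  apply Subtype.ext
  funext q
  by_cases hq : q.2 = 0
  · rw [f.2.2 q hq, g.2.2 q hq]
  · exact h q hq

lemma SM.cda {n : ℕ} (f : SM n) {q : En n × En n} (hq : q.2 ≠ 0) :
    ContDiffAt ℝ (⊤ : ℕ∞) f.1 q := f.2.1.contDiffAt ((isOpen_UU n).mem_nhds hq)

lemma SM.da {n : ℕ} (f : SM n) {q : En n × En n} (hq : q.2 ≠ 0) :
    DifferentiableAt ℝ f.1 q := (SM.cda f hq).differentiableAt (by simp)

lemma SM.fd {n : ℕ} (f : SM n) : ContDiffOn ℝ (⊤ : ℕ∞) (fderiv ℝ f.1) (UU n) :=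
  f.2.1.fderiv_of_isOpen (isOpen_UU n) (by simp)

/-- directional derivative -/
def dv {n : ℕ} (v : En n × En n) : Module.End ℝ (SM n) where
  toFun f := trunc (fun q => fderiv ℝ f.1 q v) ((SM.fd f).clm_apply contDiffOn_const)
  map_add' f g := SM.ext' fun q hq => by
    rw [trunc_apply _ _ hq]
    simp only [Submodule.coe_add, Pi.add_apply]
    rw [trunc_apply _ _ hq, trunc_apply _ _ hq, fderiv_add (SM.da f hq) (SM.da g hq)]
    rfl
  map_smul' c f := SM.ext' fun q hq => by
    rw [trunc_apply _ _ hq]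
    simp only [Submodule.coe_smul, Pi.smul_apply, RingHom.id_apply]
    rw [trunc_apply _ _ hq, fderiv_const_smul (SM.da f hq)]
    rfl

lemma dv_apply {n : ℕ} (v : En n × En n) (f : SM n) {q : En n × En n} (hq : q.2 ≠ 0) :
    (dv v f).1 q = fderiv ℝ f.1 q v :=
  trunc_apply _ ((SM.fd f).clm_apply contDiffOn_const) hq

lemma dv_eventually {n : ℕ} (v : En n × En n) (f : SM n) {q : En n × En n} (hq : q.2 ≠ 0) :
    (dv v f).1 =ᶠ[nhds q] fun q => fderiv ℝ f.1 q v := by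
  filter_upwards [(isOpen_UU n).mem_nhds hq] with q' hq'
  exact dv_apply v f hq'

lemma dv_dv {n : ℕ} (v w : En n × En n) (f : SM n) {q : En n × En n} (hq : q.2 ≠ 0) :
    (dv v (dv w f)).1 q = fderiv ℝ (fderiv ℝ f.1) q v w := by
  rw [dv_apply _ _ hq, (dv_eventually w f hq).fderiv_eq]
  have : DifferentiableAt ℝ (fderiv ℝ f.1) q :=
    ((SM.fd f).contDiffAt ((isOpen_UU n).mem_nhds hq)).differentiableAt (by simp)
  rw [fderiv_clm_apply this (differentiableAt_const w)]
  simp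

lemma dv_comm {n : ℕ} (v w : En n × En n) : dv v * dv w = dv w * dv v := by
  ext1 f
  refine SM.ext' fun q hq => ?_
  rw [Module.End.mul_apply, Module.End.mul_apply, dv_dv _ _ _ hq, dv_dv _ _ _ hq]
  exact (SM.cda f hq).isSymmSndFDerivAt (by simp only [minSmoothness_of_isRCLikeNormedField]; exact WithTop.coe_le_coe.mpr (le_top (a := (2 : ℕ∞)))) v w

/-- the coordinate functional -/
def xiC {n : ℕ} (j : Fin n) : (En n × En n) →L[ℝ] ℝ :=
  (EuclideanSpace.proj j).comp (ContinuousLinearMap.snd ℝ (En n) (En n))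

lemma xiC_apply {n : ℕ} (j : Fin n) (q : En n × En n) : xiC j q = q.2 j := rfl

/-- multiplication by `ξ^j` -/
def mz {n : ℕ} (j : Fin n) : Module.End ℝ (SM n) where
  toFun f := ⟨fun q => xiC j q * f.1 q, (xiC j).contDiff.contDiffOn.mul f.2.1,
    fun q hq => by simp [f.2.2 q hq]⟩
  map_add' f g := SM.ext' fun q hq => by simp [mul_add]
  map_smul' c f := SM.ext' fun q hq => by simp; ring

lemma mz_apply {n : ℕ} (j : Fin n) (f : SM n) (q : En n × En n) :
    (mz j f).1 q = xiC j q * f.1 q := rfl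

lemma dv_mz {n : ℕ} (v : En n × En n) (j : Fin n) :
    dv v * mz j = mz j * dv v + (xiC j v) • 1 := by
  ext1 f
  refine SM.ext' fun q hq => ?_
  simp only [Module.End.mul_apply, LinearMap.add_apply, LinearMap.smul_apply,
    Module.End.one_apply, Submodule.coe_add, Submodule.coe_smul, Pi.add_apply, Pi.smul_apply]
  rw [dv_apply _ _ hq, mz_apply, dv_apply _ _ hq]
  have : (mz j f).1 = (fun q => xiC j q) * f.1 := rfl
  rw [this, fderiv_mul (xiC j).differentiableAt (SM.da f hq)]
  simp
  ring

/-- X -/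
def oX {n : ℕ} (j : Fin n) : Module.End ℝ (SM n) := dv (EuclideanSpace.single j 1, 0)
/-- Y -/
def oY {n : ℕ} (j : Fin n) : Module.End ℝ (SM n) := dv (0, EuclideanSpace.single j 1)

lemma weyl (n : ℕ) : WeylOps (oX (n := n)) oY mz where
  xx i j := dv_comm _ _
  yx i j := dv_comm _ _
  yy i j := dv_comm _ _
  xz i j := by
    rw [oX, dv_mz]
    simp [xiC_apply]
  zz i j := by
    ext1 f
    refine SM.ext' fun q hq => ?_
    simp only [Module.End.mul_apply, mz_apply]
    ring
  yz i j := by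
    rw [oY, dv_mz, xiC_apply]
    simp only [PiLp.single_apply, eq_comm (a := j)]
    split_ifs <;> simp

lemma sum_coord {n : ℕ} (ξ : En n) : ξ = ∑ j, ξ j • EuclideanSpace.single j (1 : ℝ) := by
  ext i
  simp [Pi.single_apply]

/-- `F` is represented by `f` -/
def SRep {n : ℕ} (F : En n → En n → ℝ) (f : SM n) : Prop := ∀ x ξ, ξ ≠ 0 → F x ξ = f.1 (x, ξ)

lemma fd_left {n : ℕ} (f : SM n) (x ξ : En n) (hξ : ξ ≠ 0) (v : En n) :
    fderiv ℝ (fun x' => f.1 (x', ξ)) x v = fderiv ℝ f.1 (x, ξ) (v, 0) := by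
  have h1 : HasFDerivAt (fun x' : En n => (x', ξ)) (ContinuousLinearMap.inl ℝ (En n) (En n)) x :=
    hasFDerivAt_prodMk_left x ξ
  have h2 := (SM.da f (q := (x, ξ)) hξ).hasFDerivAt
  have := (HasFDerivAt.comp x h2 h1).fderiv
  simp only [Function.comp_def] at this
  rw [this]; simp

lemma fd_right {n : ℕ} (f : SM n) (x ξ : En n) (hξ : ξ ≠ 0) (v : En n) :
    fderiv ℝ (fun ξ' => f.1 (x, ξ')) ξ v = fderiv ℝ f.1 (x, ξ) (0, v) := by
  have h1 : HasFDerivAt (fun ξ' : En n => (x, ξ')) (ContinuousLinearMap.inr ℝ (En n) (En n)) ξ :=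
    hasFDerivAt_prodMk_right x ξ
  have h2 := (SM.da f (q := (x, ξ)) hξ).hasFDerivAt
  have := (HasFDerivAt.comp ξ h2 h1).fderiv
  simp only [Function.comp_def] at this
  rw [this]; simp

namespace SRep
variable {n : ℕ} {F : En n → En n → ℝ} {f : SM n}

lemma pdx (h : SRep F f) (j : Fin n) : SRep (pdx j F) (oX j f) := by
  intro x ξ hξ
  rw [oX, dv_apply _ _ hξ, ← fd_left f x ξ hξ, _root_.pdx]
  have : (fun x' => F x' ξ) = fun x' => f.1 (x', ξ) := funext fun x' => h x' ξ hξ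
  rw [this]

lemma pdxi (h : SRep F f) (j : Fin n) : SRep (pdxi j F) (oY j f) := by
  intro x ξ hξ
  rw [oY, dv_apply _ _ hξ, ← fd_right f x ξ hξ, _root_.pdxi]
  have : (fun ξ' => F x ξ') =ᶠ[nhds ξ] fun ξ' => f.1 (x, ξ') := by
    filter_upwards [isOpen_ne.mem_nhds hξ] with ξ' h'
    exact h x ξ' h'
  rw [this.fderiv_eq]

lemma dirx (h : SRep F f) : SRep (dirx F) (WeylOps.C mz oX f) := by
  intro x ξ hξ
  have : (fun x' => F x' ξ) = fun x' => f.1 (x', ξ) := funext fun x' => h x' ξ hξ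
  rw [_root_.dirx, this]
  simp only [WeylOps.C, LinearMap.sum_apply, Module.End.mul_apply, AddSubmonoidClass.coe_finsetSum,
    Finset.sum_apply, mz_apply, xiC_apply]
  have hs : ∀ j, (oX j f).1 (x, ξ) = fderiv ℝ (fun x' => f.1 (x', ξ)) x (EuclideanSpace.single j 1) :=
    fun j => by rw [oX, dv_apply _ _ hξ, ← fd_left f x ξ hξ]
  simp only [hs]
  generalize fderiv ℝ (fun x' => f.1 (x', ξ)) x = T
  conv_lhs => rw [sum_coord ξ]
  rw [map_sum]
  simp

lemma johnOp (h : SRep F f) (i j : Fin n) : SRep (johnOp i j F) (WeylOps.J oX oY i j f) := by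
  intro x ξ hξ
  rw [_root_.johnOp, (h.pdxi j).pdx i x ξ hξ, (h.pdxi i).pdx j x ξ hξ]
  simp [WeylOps.J]

lemma johnIter (h : SRep F f) (L : List (Fin n × Fin n)) :
    SRep (johnIter L F) (WeylOps.P oX oY L f) := by
  induction L with
  | nil => simpa [_root_.johnIter, WeylOps.P] using h
  | cons q L ih =>
    have := ih.johnOp q.1 q.2
    simpa [_root_.johnIter, WeylOps.P] using this

lemma pdxList (h : SRep F f) (L : List (Fin n)) : SRep (pdxList L F) ((L.map oX).prod f) := by
  induction L with
  | nil => simpa [_root_.pdxList] using h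
  | cons q L ih => simpa [_root_.pdxList] using ih.pdx q

lemma pdxiList (h : SRep F f) (L : List (Fin n)) : SRep (pdxiList L F) ((L.map oY).prod f) := by
  induction L with
  | nil => simpa [_root_.pdxiList] using h
  | cons q L ih => simpa [_root_.pdxiList] using ih.pdxi q

lemma dirxIter (h : SRep F f) (r : ℕ) :
    SRep (_root_.dirx^[r] F) ((WeylOps.C mz oX ^ r) f) := by
  induction r with
  | zero => simpa using h
  | succ r ih =>
    rw [Function.iterate_succ_apply', pow_succ', Module.End.mul_apply]
    exact ih.dirx

end SRep

lemma map_finRange_eq {α : Type*} (L : List α) (N : ℕ) (hL : L.length = N) :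
    (List.finRange N).map (fun s => L.get (s.cast hL.symm)) = L := by
  subst hL
  apply List.ext_getElem <;> simp

lemma euler {n : ℕ} (v : SM n) (d : ℤ)
    (hh : ∀ x ξ : En n, ξ ≠ 0 → ∀ t : ℝ, 0 < t → v.1 (x, t • ξ) = t ^ d * v.1 (x, ξ)) :
    WeylOps.C mz oY v = (d : ℝ) • v := by
  refine SM.ext' ?_
  rintro ⟨x, ξ⟩ (hξ : ξ ≠ 0)
  simp only [WeylOps.C, LinearMap.sum_apply, Module.End.mul_apply, AddSubmonoidClass.coe_finsetSum,
    Finset.sum_apply, mz_apply, xiC_apply]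
  have hs : ∀ j, (oY j v).1 (x, ξ) = fderiv ℝ v.1 (x, ξ) (0, EuclideanSpace.single j 1) :=
    fun j => by rw [oY, dv_apply _ _ hξ]
  simp only [hs]
  have h1 : ∑ j, ξ j * fderiv ℝ v.1 (x, ξ) (0, EuclideanSpace.single j 1) =
      fderiv ℝ v.1 (x, ξ) (0, ξ) := by
    have : ((0 : En n), ξ) = ∑ j, ξ j • ((0 : En n), EuclideanSpace.single j (1 : ℝ)) := by
      apply Prod.ext
      · simp [Prod.fst_sum]
      · rw [Prod.snd_sum]; exact sum_coord ξ
    rw [this, map_sum]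
    simp only [map_smul, smul_eq_mul]
  rw [h1]
  have h2 : HasDerivAt (fun t : ℝ => (x, t • ξ)) ((0 : En n), ξ) 1 := by
    have := (hasDerivAt_id (1 : ℝ)).smul_const ξ
    simp only [one_smul, id] at this
    exact (hasDerivAt_const (1 : ℝ) x).prodMk this
  have h3 : HasFDerivAt v.1 (fderiv ℝ v.1 (x, ξ)) (x, (1 : ℝ) • ξ) := by
    rw [one_smul]; exact (SM.da v (q := (x, ξ)) hξ).hasFDerivAt
  have h4 := h3.comp_hasDerivAt (1 : ℝ) h2
  have h5 : HasDerivAt (fun t : ℝ => t ^ d * v.1 (x, ξ)) ((d : ℝ) * v.1 (x, ξ)) 1 := by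
    have := (hasDerivAt_zpow d (1 : ℝ) (Or.inl one_ne_zero)).mul_const (v.1 (x, ξ))
    simpa using this
  have h6 : (v.1 ∘ fun t : ℝ => (x, t • ξ)) =ᶠ[nhds 1] fun t : ℝ => t ^ d * v.1 (x, ξ) := by
    filter_upwards [lt_mem_nhds (zero_lt_one (α := ℝ))] with t ht
    exact hh x ξ hξ t ht
  exact h4.unique (h5.congr_of_eventuallyEq h6)

/-- if `ψ^k` is smooth on `ℝⁿ×(ℝⁿ∖{0})`, satisfies the `(m+1)`-fold
John equations and the homogeneity `ψ^k(x,tξ) = (t^{m−k}/|t|)ψ^k(x,ξ)`, and the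
`ψ^p` are defined by `ψ^p = ((−1)^{k−p}/(C(k,p)(k−p)!)) ⟨ξ,∂_x⟩^{k−p} ψ^k`, then
each symmetrized combination `Ψ_{i₁…i_ℓ}` (for `0 ≤ ℓ ≤ k < m`) satisfies the
`(m−ℓ+1)`-fold John equations. -/
theorem john_equations_for_Psi
    (n m k : ℕ) (hk : k < m)
    (ψk : En n → En n → ℝ)
    (hsmooth : ContDiffOn ℝ (⊤ : ℕ∞) (fun q : En n × En n => ψk q.1 q.2)
      {q : En n × En n | q.2 ≠ 0})
    (hJohn : ∀ idx jdx : Fin (m + 1) → Fin n, ∀ x ξ : En n, ξ ≠ 0 →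
      johnIter ((List.finRange (m + 1)).map (fun s => (idx s, jdx s))) ψk x ξ = 0)
    (hhom : ∀ x ξ : En n, ξ ≠ 0 → ∀ t : ℝ, t ≠ 0 →
      ψk x (t • ξ) = (t ^ ((m : ℤ) - k) / |t|) * ψk x ξ)
    (ψ : ℕ → En n → En n → ℝ)
    (hψ : ∀ p, p ≤ k → ∀ x ξ : En n,
      ψ p x ξ = ((-1 : ℝ) ^ (k - p) / ((k.choose p) * ((k - p).factorial) : ℝ)) *
        (dirx^[k - p] ψk) x ξ)
    (ℓ : ℕ) (hℓ : ℓ ≤ k) (idx : Fin ℓ → Fin n)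
    (Ψ : En n → En n → ℝ)
    (hΨ : ∀ x ξ : En n, Ψ x ξ = (((m - ℓ).factorial : ℝ) / (m.factorial : ℝ)) *
      ((ℓ.factorial : ℝ))⁻¹ *
      ∑ π : Equiv.Perm (Fin ℓ), ∑ p ∈ Finset.range (ℓ + 1),
        (-1 : ℝ) ^ p * (ℓ.choose p) *
          pdxList (((List.finRange ℓ).take p).map (fun s => idx (π s)))
            (pdxiList (((List.finRange ℓ).drop p).map (fun s => idx (π s)))
              (ψ p)) x ξ) :
    ∀ idx' jdx' : Fin (m - ℓ + 1) → Fin n, ∀ x ξ : En n, ξ ≠ 0 →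
      johnIter ((List.finRange (m - ℓ + 1)).map (fun s => (idx' s, jdx' s)))
        Ψ x ξ = 0 := by
  intro idx' jdx' x ξ hξ
  have W := weyl n
  let v : SM n := trunc (fun q : En n × En n => ψk q.1 q.2) hsmooth
  have hv : SRep ψk v := fun x ξ hξ => (trunc_apply _ hsmooth (q := (x, ξ)) hξ).symm
  have hE : WeylOps.C mz oY v = ((m : ℝ) - k - 1) • v := by
    have := euler v ((m : ℤ) - k - 1) (fun x ξ hξ t ht => by
      rw [← hv x (t • ξ) (smul_ne_zero ht.ne' hξ), ← hv x ξ hξ, hhom x ξ hξ t ht.ne',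
        abs_of_pos ht, zpow_sub_one₀ ht.ne', div_eq_mul_inv])
    rw [this]
    push_cast
    rfl
  have hP : ∀ L : List (Fin n × Fin n), L.length = m + 1 → WeylOps.P oX oY L v = 0 := by
    intro L hL
    refine SM.ext' ?_
    rintro ⟨x, ξ⟩ (hξ : ξ ≠ 0)
    rw [← hv.johnIter L x ξ hξ]
    have := hJohn (fun s => (L.get (s.cast hL.symm)).1) (fun s => (L.get (s.cast hL.symm)).2) x ξ hξ
    simp only [Prod.mk.eta] at this
    rw [map_finRange_eq L (m + 1) hL] at this
    exact this
  have g := W.good_init m k v hE hP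
  set u : ℕ → SM n := (fun p => ((-1 : ℝ) ^ (k - p) /
      ((k.choose p) * ((k - p).factorial) : ℝ)) • ((WeylOps.C mz oX) ^ (k - p)) v) with hu
  have hψu : ∀ p, p ≤ k → SRep (ψ p) (u p) := by
    intro p hp x ξ hξ
    rw [hψ p hp, hv.dirxIter (k - p) x ξ hξ]
    rfl
  have g2 : WeylOps.Good oX oY mz ((m - ℓ : ℕ) : ℝ) (m - ℓ + 1) (k - ℓ)
      (WeylOps.steps oX oY ((List.finRange ℓ).map idx) u) := by
    apply W.good_steps
    have hlen : ((List.finRange ℓ).map idx).length = ℓ := by simp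
    rw [hlen, show m - ℓ + ℓ = m by omega, show k - ℓ + ℓ = k by omega]
    exact g
  have hfin : SRep Ψ ((((m - ℓ).factorial : ℝ) / (m.factorial : ℝ) * ((ℓ.factorial : ℝ))⁻¹) •
      ((ℓ.factorial : ℝ) • WeylOps.steps oX oY ((List.finRange ℓ).map idx) u 0)) := by
    intro x ξ hξ
    rw [hΨ, W.steps_sym]
    simp only [Submodule.coe_smul, AddSubmonoidClass.coe_finsetSum, Finset.sum_apply,
      Pi.smul_apply, smul_eq_mul]
    congr 1
    refine Finset.sum_congr rfl fun π _ => Finset.sum_congr rfl fun p hp => ?_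
    have hp' : p ≤ k := by simp at hp; omega
    rw [(((hψu p hp').pdxiList _).pdxList _) x ξ hξ]
  rw [hfin.johnIter _ x ξ hξ, map_smul, map_smul, g2.jj 0 (Nat.zero_le _) _ (by simp)]
  simp
end
end

section
/- Let 0 ≤ ℓ ≤ k ≤ m, let (φ⁰,…,φ^k) ∈ (𝒮(T𝕊^{n−1}))^{k+1}, define ψ^p (0 ≤ p ≤ ℓ) by ψ^p(x,ξ) = |ξ|^{m−2p−1} Σ_{r=0}^p (−1)^{p−r} C(p,r) |ξ|^r ⟨ξ,x⟩^{p−r} φ^r(x − (⟨x,ξ⟩/|ξ|²)ξ, ξ/|ξ|), and suppose g_s ∈ 𝒮(S^{m−s}) (0 ≤ s ≤ ℓ−1) satisfy ψ^p = Σ_{s=0}^p (−1)^s C(p,s) s! J^{p−s} g_s for 0 ≤ p ≤ ℓ−1. Set χ^ℓ = ((−1)^ℓ/ℓ!)(ψ^ℓ − Σ_{s=0}^{ℓ−1} (−1)^s C(ℓ,s) s! J^{ℓ−s} g_s). Then for every choice of indices 1 ≤ i₁,j₁,…,i_{m−ℓ+1},j_{m−ℓ+1} ≤ n, the restriction (J_{i₁j₁}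 ⋯ J_{i_{m−ℓ+1}j_{m−ℓ+1}} χ^ℓ)|_{T𝕊^{n−1}} belongs to 𝒮(T𝕊^{n−1}). -/
noncomputable section

open MeasureTheory Filter
open scoped RealInnerProductSpace BigOperators

open scoped Topology ContDiff SchwartzMap

section PartInt
variable {Y : Type} [NormedAddCommGroup Y] [NormedSpace ℝ Y]

lemma pi_bound {F : Type} [NormedAddCommGroup F] [NormedSpace ℝ F] (H : 𝓢(Y × ℝ, F)) (k : ℕ) :
    ∃ C : ℝ, 0 ≤ C ∧ ∀ y t, ‖y‖ ^ k * ‖H (y, t)‖ ≤ C * (1 + t ^ 2)⁻¹ := by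
  obtain ⟨C1, h1⟩ := H.decay k 0
  obtain ⟨C2, h2⟩ := H.decay (k + 2) 0
  have hb : ∀ y t, ‖y‖ ^ k * ‖H (y, t)‖ ≤ (C1 + C2) * (1 + t ^ 2)⁻¹ := by
    intro y t
    have a1 := h1.2 (y, t)
    have a2 := h2.2 (y, t)
    rw [norm_iteratedFDeriv_zero] at a1 a2
    have hy : ‖y‖ ≤ ‖(y, t)‖ := norm_fst_le (y, t)
    have ht : |t| ≤ ‖(y, t)‖ := norm_snd_le (y, t)
    have ht2 : t ^ 2 ≤ ‖(y, t)‖ ^ 2 := by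
      rw [← sq_abs]; gcongr
    rw [← div_eq_mul_inv, le_div_iff₀ (by positivity)]
    calc ‖y‖ ^ k * ‖H (y, t)‖ * (1 + t ^ 2)
        ≤ ‖(y, t)‖ ^ k * ‖H (y, t)‖ * (1 + ‖(y, t)‖ ^ 2) := by gcongr
      _ = ‖(y, t)‖ ^ k * ‖H (y, t)‖ + ‖(y, t)‖ ^ (k + 2) * ‖H (y, t)‖ := by ring
      _ ≤ _ := by gcongr
  exact ⟨C1 + C2, add_nonneg h1.1.le h2.1.le, hb⟩

lemma pi_integrable {F : Type} [NormedAddCommGroup F] [NormedSpace ℝ F] (H : 𝓢(Y × ℝ, F)) (y : Y) :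
    Integrable (fun t => H (y, t)) := by
  obtain ⟨C, -, hC⟩ := pi_bound H 0
  refine Integrable.mono' (integrable_inv_one_add_sq.const_mul C) ?_ ?_
  · exact (H.continuous.comp (by fun_prop)).aestronglyMeasurable
  · exact Eventually.of_forall fun t => by simpa using hC y t

def piD {F : Type} [NormedAddCommGroup F] [NormedSpace ℝ F] (H : 𝓢(Y × ℝ, F)) :
    𝓢(Y × ℝ, Y →L[ℝ] F) :=
  SchwartzMap.postcompCLM
    ((ContinuousLinearMap.compL ℝ Y (Y × ℝ) F).flip (ContinuousLinearMap.inl ℝ Y ℝ))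
    (SchwartzMap.fderivCLM ℝ _ _ H)

lemma piD_apply {F : Type} [NormedAddCommGroup F] [NormedSpace ℝ F] (H : 𝓢(Y × ℝ, F)) (v) :
    piD H v = (fderiv ℝ H v).comp (ContinuousLinearMap.inl ℝ Y ℝ) := rfl

lemma pi_hasFDerivAt {F : Type} [NormedAddCommGroup F] [NormedSpace ℝ F]
    (H : 𝓢(Y × ℝ, F)) (y : Y) :
    HasFDerivAt (fun y => ∫ t : ℝ, H (y, t)) (∫ t : ℝ, piD H (y, t)) y := by
  obtain ⟨C, -, hC⟩ := pi_bound (piD H) 0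
  refine hasFDerivAt_integral_of_dominated_of_fderiv_le (s := Set.univ)
    (F := fun y t => H (y, t)) (F' := fun y t => piD H (y, t))
    (bound := fun t => C * (1 + t ^ 2)⁻¹) univ_mem ?_ (pi_integrable H y) ?_ ?_
    (integrable_inv_one_add_sq.const_mul C) ?_
  · exact Eventually.of_forall fun z => (H.continuous.comp (by fun_prop)).aestronglyMeasurable
  · exact ((piD H).continuous.comp (by fun_prop)).aestronglyMeasurable
  · exact Eventually.of_forall fun t z _ => by simpa using hC z t
  · refine Eventually.of_forall fun t z _ => ?_
    have h1 : HasFDerivAt (fun y : Y => (y, t)) (ContinuousLinearMap.inl ℝ Y ℝ) z :=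
      hasFDerivAt_prodMk_left z t
    exact (H.differentiableAt.hasFDerivAt (x := (z, t))).comp z h1

lemma pi_fderiv {F : Type} [NormedAddCommGroup F] [NormedSpace ℝ F] (H : 𝓢(Y × ℝ, F)) :
    fderiv ℝ (fun y => ∫ t : ℝ, H (y, t)) = fun y => ∫ t : ℝ, piD H (y, t) :=
  funext fun y => (pi_hasFDerivAt H y).fderiv

lemma pi_contDiff (n : ℕ) : ∀ {F : Type} [NormedAddCommGroup F] [NormedSpace ℝ F]
    (H : 𝓢(Y × ℝ, F)), ContDiff ℝ n (fun y => ∫ t : ℝ, H (y, t)) := by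
  induction n with
  | zero =>
    intro F _ _ H
    refine contDiff_zero.2 (continuous_iff_continuousAt.2 fun y => (pi_hasFDerivAt H y).continuousAt)
  | succ n ih =>
    intro F _ _ H
    rw [Nat.cast_succ, contDiff_succ_iff_fderiv]
    refine ⟨fun y => (pi_hasFDerivAt H y).differentiableAt, by simp, ?_⟩
    rw [pi_fderiv]
    exact ih _

lemma pi_decay (k n : ℕ) : ∀ {F : Type} [NormedAddCommGroup F] [NormedSpace ℝ F]
    (H : 𝓢(Y × ℝ, F)), ∃ C : ℝ, ∀ y,
      ‖y‖ ^ k * ‖iteratedFDeriv ℝ n (fun y => ∫ t : ℝ, H (y, t)) y‖ ≤ C := by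
  induction n with
  | zero =>
    intro F _ _ H
    obtain ⟨C, h0, hC⟩ := pi_bound H k
    refine ⟨∫ t : ℝ, C * (1 + t ^ 2)⁻¹, fun y => ?_⟩
    rw [norm_iteratedFDeriv_zero]
    calc ‖y‖ ^ k * ‖∫ t : ℝ, H (y, t)‖ ≤ ‖y‖ ^ k * ∫ t : ℝ, ‖H (y, t)‖ := by
          gcongr; exact norm_integral_le_integral_norm _
      _ = ∫ t : ℝ, ‖y‖ ^ k * ‖H (y, t)‖ := (integral_const_mul _ _).symm
      _ ≤ _ := by
          refine integral_mono ((pi_integrable H y).norm.const_mul _)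
            (integrable_inv_one_add_sq.const_mul C) fun t => hC y t
  | succ n ih =>
    intro F _ _ H
    obtain ⟨C, hC⟩ := ih (piD H)
    refine ⟨C, fun y => ?_⟩
    rw [← norm_iteratedFDeriv_fderiv, pi_fderiv]
    exact hC y

/-- Partial integral of a Schwartz function is Schwartz. -/
def partInt {F : Type} [NormedAddCommGroup F] [NormedSpace ℝ F] (H : 𝓢(Y × ℝ, F)) : 𝓢(Y, F) where
  toFun y := ∫ t : ℝ, H (y, t)
  smooth' := contDiff_infty.2 fun n => pi_contDiff n H
  decay' k n := pi_decay k n H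
end PartInt

section Comp
variable {D E : Type} [NormedAddCommGroup D] [NormedSpace ℝ D]
  [NormedAddCommGroup E] [NormedSpace ℝ E]

lemma comp_aux (f : 𝓢(E, ℝ)) {g : D → E} (hg : g.HasTemperateGrowth) (kg : ℕ) (Cg : ℝ)
    (hCg : 0 ≤ Cg) (k n : ℕ) : ∃ K : ℝ, 0 ≤ K ∧ ∀ x, ‖x‖ ≤ Cg * (1 + ‖g x‖) ^ kg →
      (1 + ‖x‖) ^ k * ‖iteratedFDeriv ℝ n (f ∘ g) x‖ ≤ K := by
  rcases hg.norm_iteratedFDeriv_le_uniform n with ⟨l, C, hC, hgrowth⟩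
  let k' := kg * (k + l * n)
  let seminorm_f := ((Finset.Iic (k', n)).sup (schwartzSeminormFamily ℝ _ _)) f
  refine ⟨(1 + Cg) ^ (k + l * n) * ((C + 1) ^ n * n.factorial * 2 ^ k' * seminorm_f),
    by positivity, ?_⟩
  intro x hx
  have hg_upper'' : (1 + ‖x‖) ^ (k + l * n) ≤ (1 + Cg) ^ (k + l * n) * (1 + ‖g x‖) ^ k' := by
    rw [pow_mul, ← mul_pow]
    gcongr
    rw [add_mul]
    refine add_le_add ?_ hx
    nth_rw 1 [← one_mul (1 : ℝ)]
    gcongr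
    apply one_le_pow₀
    simp only [le_add_iff_nonneg_right, norm_nonneg]
  have hbound (i) (hi : i ≤ n) :
      ‖iteratedFDeriv ℝ i f (g x)‖ ≤ 2 ^ k' * seminorm_f / (1 + ‖g x‖) ^ k' := by
    have hpos : 0 < (1 + ‖g x‖) ^ k' := by positivity
    rw [le_div_iff₀' hpos]
    change i ≤ (k', n).snd at hi
    exact SchwartzMap.one_add_le_sup_seminorm_apply le_rfl hi _ _
  have hgrowth' (N : ℕ) (hN₁ : 1 ≤ N) (hN₂ : N ≤ n) :
      ‖iteratedFDeriv ℝ N g x‖ ≤ ((C + 1) * (1 + ‖x‖) ^ l) ^ N := by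
    refine (hgrowth N hN₂ x).trans ?_
    rw [mul_pow]
    have hN₁' := (lt_of_lt_of_le zero_lt_one hN₁).ne'
    gcongr
    · exact le_trans (by simp) (le_self_pow₀ (by simp [hC]) hN₁')
    · refine le_self_pow₀ (one_le_pow₀ ?_) hN₁'
      simp only [le_add_iff_nonneg_right, norm_nonneg]
  have := norm_iteratedFDeriv_comp_le (f.smooth ⊤) hg.1 (mod_cast le_top) x hbound hgrowth'
  grw [this]
  have rearrange :
    (1 + ‖x‖) ^ k *
        (n.factorial * (2 ^ k' * seminorm_f / (1 + ‖g x‖) ^ k') * ((C + 1) * (1 + ‖x‖) ^ l) ^ n) =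
      (1 + ‖x‖) ^ (k + l * n) / (1 + ‖g x‖) ^ k' *
        ((C + 1) ^ n * n.factorial * 2 ^ k' * seminorm_f) := by
    rw [mul_pow, pow_add, ← pow_mul]
    ring
  rw [rearrange]
  have hgxk' : 0 < (1 + ‖g x‖) ^ k' := by positivity
  rw [← div_le_iff₀ hgxk'] at hg_upper''
  grw [hg_upper'']

lemma exists_cutoff_comp (f : 𝓢(E, ℝ)) {g : D → E} (hg : g.HasTemperateGrowth)
    {c : D → ℝ} (hc : c.HasTemperateGrowth) (Cg : ℝ)
    (hup : ∀ x ∈ tsupport c, ‖x‖ ≤ Cg * (1 + ‖g x‖)) :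
    ∃ Φ : 𝓢(D, ℝ), ∀ x, Φ x = c x * f (g x) := by
  have hs : ContDiff ℝ ∞ (fun x => c x * (f ∘ g) x) := hc.1.mul ((f.smooth ⊤).comp hg.1)
  refine ⟨⟨fun x => c x * (f ∘ g) x, hs, fun k n => ?_⟩, fun x => rfl⟩
  obtain ⟨l, C, hC, hgrowth⟩ := hc.norm_iteratedFDeriv_le_uniform n
  have H := fun i => comp_aux f hg 1 (max Cg 0) (le_max_right _ _) (k + l) i
  choose K hK0 hK using H
  refine ⟨∑ i ∈ Finset.range (n + 1), (n.choose i : ℝ) * C * K (n - i), fun x => ?_⟩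
  have hn := norm_iteratedFDeriv_mul_le (𝕜 := ℝ) (N := ∞) hc.1 ((f.smooth ⊤).comp hg.1) x
    (n := n) (mod_cast le_top)
  refine (mul_le_mul_of_nonneg_left hn (by positivity)).trans ?_
  rw [Finset.mul_sum]
  refine Finset.sum_le_sum fun i hi => ?_
  by_cases hx : x ∈ tsupport c
  · have hx' : ‖x‖ ≤ max Cg 0 * (1 + ‖g x‖) ^ 1 := by
      rw [pow_one]
      exact (hup x hx).trans (by gcongr; exact le_max_left _ _)
    have h1 := hgrowth i (by simpa [Nat.lt_succ_iff] using hi) x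
    have h2 := hK (n - i) x hx'
    calc ‖x‖ ^ k * (n.choose i * ‖iteratedFDeriv ℝ i c x‖ * ‖iteratedFDeriv ℝ (n - i) (f ∘ g) x‖)
        ≤ (1 + ‖x‖) ^ k * (n.choose i * (C * (1 + ‖x‖) ^ l) *
            ‖iteratedFDeriv ℝ (n - i) (f ∘ g) x‖) := by
          gcongr; linarith
      _ = n.choose i * C * ((1 + ‖x‖) ^ (k + l) * ‖iteratedFDeriv ℝ (n - i) (f ∘ g) x‖) := by
          rw [pow_add]; ring
      _ ≤ _ := by gcongr
  · have : iteratedFDeriv ℝ i c x = 0 := by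
      by_contra h
      exact hx (support_iteratedFDeriv_subset i h)
    rw [this]
    simp only [norm_zero, mul_zero, zero_mul]
    have := hK0 (n - i)
    positivity
end Comp

section GoodClass
variable {n : ℕ}

lemma htg_fst {A B : Type} [NormedAddCommGroup A] [NormedSpace ℝ A] [NormedAddCommGroup B]
    [NormedSpace ℝ B] : (fun p : A × B => p.1).HasTemperateGrowth :=
  (ContinuousLinearMap.fst ℝ A B).hasTemperateGrowth

lemma htg_snd {A B : Type} [NormedAddCommGroup A] [NormedSpace ℝ A] [NormedAddCommGroup B]
    [NormedSpace ℝ B] : (fun p : A × B => p.2).HasTemperateGrowth :=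
  (ContinuousLinearMap.snd ℝ A B).hasTemperateGrowth

lemma htg_prodMk {V A B : Type} [NormedAddCommGroup V] [NormedSpace ℝ V]
    [NormedAddCommGroup A] [NormedSpace ℝ A] [NormedAddCommGroup B]
    [NormedSpace ℝ B] {f : V → A} {g : V → B} (hf : f.HasTemperateGrowth)
    (hg : g.HasTemperateGrowth) : (fun v => (f v, g v)).HasTemperateGrowth := by
  have h1 := (ContinuousLinearMap.inl ℝ A B).hasTemperateGrowth.comp hf
  have h2 := (ContinuousLinearMap.inr ℝ A B).hasTemperateGrowth.comp hg
  convert h1.add h2 using 1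
  ext v <;> simp

lemma htg_inner {V : Type} [NormedAddCommGroup V] [NormedSpace ℝ V]
    {f g : V → En n} (hf : f.HasTemperateGrowth)
    (hg : g.HasTemperateGrowth) : (fun v => (⟪f v, g v⟫ : ℝ)).HasTemperateGrowth :=
  (innerSL ℝ (E := En n)).bilinear_hasTemperateGrowth hf hg

lemma htg_compact {V : Type} [NormedAddCommGroup V] [NormedSpace ℝ V]
    {f : V → ℝ} (h1 : ContDiff ℝ ∞ f) (h2 : HasCompactSupport f) : f.HasTemperateGrowth :=
  (h2.toSchwartzMap h1).hasTemperateGrowth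

/-- Smooth cut-off, compactly supported away from the origin. -/
def CutA (a : En n → ℝ) : Prop :=
  ContDiff ℝ ∞ a ∧ HasCompactSupport a ∧ (0 : En n) ∉ tsupport a

/-- Smooth compactly supported function of one variable. -/
def CutB (b : ℝ → ℝ) : Prop := ContDiff ℝ ∞ b ∧ HasCompactSupport b

/-- Functions that become Schwartz after cutting off. -/
def Good (F : En n → En n → ℝ) : Prop :=
  ∀ a b, CutA a → CutB b → ∃ Φ : 𝓢(En n × En n, ℝ), ∀ x ξ,
    Φ (x, ξ) = a ξ * b ⟪x, ξ⟫ * F x ξ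

lemma CutA.zero {a : En n → ℝ} (h : CutA a) : a 0 = 0 :=
  image_eq_zero_of_notMem_tsupport h.2.2

lemma CutA.mono {a c : En n → ℝ} (h : CutA a) (hc : ContDiff ℝ ∞ c)
    (hs : tsupport c ⊆ tsupport a) : CutA c :=
  ⟨hc, h.2.1.of_isClosed_subset (isClosed_tsupport _) hs, fun h0 => h.2.2 (hs h0)⟩

lemma CutA.mul {a h : En n → ℝ} (ha : CutA a) (hh : ∀ ξ, ξ ≠ 0 → ContDiffAt ℝ ∞ h ξ) :
    CutA (fun ξ => a ξ * h ξ) := by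
  refine ha.mono ?_ (tsupport_mul_subset_left (f := a) (g := h))
  refine contDiff_iff_contDiffAt.2 fun ξ => ?_
  by_cases hξ : ξ = 0
  · subst hξ
    have : (fun ξ => a ξ * h ξ) =ᶠ[𝓝 0] fun _ => 0 := by
      filter_upwards [notMem_tsupport_iff_eventuallyEq.1 ha.2.2] with z hz
      simp [hz]
    exact contDiffAt_const.congr_of_eventuallyEq this
  · exact ha.1.contDiffAt.mul (hh ξ hξ)

lemma CutA.fderiv {a : En n → ℝ} (ha : CutA a) (v : En n) :
    CutA (fun ξ => fderiv ℝ a ξ v) := by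
  refine ha.mono ?_ ?_
  · exact (ha.1.fderiv_right (m := ∞) (by simp)).clm_apply contDiff_const
  · exact (closure_mono fun z hz => by
      simp only [Function.mem_support] at hz ⊢
      intro h; apply hz; rw [h]; rfl).trans (tsupport_fderiv_subset ℝ (f := a))

lemma CutB.deriv {b : ℝ → ℝ} (hb : CutB b) : CutB (deriv b) :=
  ⟨(contDiff_infty_iff_deriv.1 hb.1).2, hb.2.deriv⟩

lemma exists_cut {V : Type} [NormedAddCommGroup V] [NormedSpace ℝ V] [FiniteDimensional ℝ V]
    {K U : Set V} (hK : IsCompact K) (hU : IsOpen U) (h : K ⊆ U) :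
    ∃ f : V → ℝ, ContDiff ℝ ∞ f ∧ HasCompactSupport f ∧ tsupport f ⊆ U ∧
      ∀ᶠ x in 𝓝ˢ K, f x = 1 := by
  obtain ⟨t, ht, hKt, htU⟩ := exists_compact_between hK hU h
  obtain ⟨f, hf1, hf0, -⟩ := exists_contMDiffMap_one_nhds_of_subset_interior
    (modelWithCornersSelf ℝ V) (n := (⊤ : ℕ∞)) hK.isClosed hKt
  have hs : tsupport f ⊆ t := closure_minimal
    (fun z hz => by by_contra h; exact hz (hf0 z h)) ht.isClosed
  exact ⟨f, f.contMDiff.contDiff, ht.of_isClosed_subset (isClosed_tsupport _) hs,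
    hs.trans htU, hf1⟩

lemma exists_cutA {K : Set (En n)} (hK : IsCompact K) (h : (0 : En n) ∉ K) :
    ∃ a : En n → ℝ, CutA a ∧ ∀ᶠ x in 𝓝ˢ K, a x = 1 := by
  obtain ⟨f, h1, h2, h3, h4⟩ := exists_cut hK (isOpen_compl_singleton (x := (0 : En n)))
    (fun z hz h0 => h (by rwa [← Set.mem_singleton_iff.1 h0]))
  exact ⟨f, ⟨h1, h2, fun h0 => h3 h0 rfl⟩, h4⟩

lemma exists_cutB (s : ℝ) : ∃ b : ℝ → ℝ, CutB b ∧ ∀ᶠ x in 𝓝 s, b x = 1 := by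
  obtain ⟨f, h1, h2, h3, h4⟩ := exists_cut (isCompact_singleton (x := s)) isOpen_univ
    (Set.subset_univ _)
  exact ⟨f, ⟨h1, h2⟩, by simpa using h4⟩

lemma Good.congr {F G : En n → En n → ℝ} (hF : Good F) (h : ∀ x ξ, ξ ≠ 0 → G x ξ = F x ξ) :
    Good G := by
  intro a b ha hb
  obtain ⟨Φ, hΦ⟩ := hF a b ha hb
  refine ⟨Φ, fun x ξ => ?_⟩
  rw [hΦ]
  by_cases hξ : ξ = 0
  · simp [hξ, ha.zero]
  · rw [h x ξ hξ]

lemma Good.add {F G : En n → En n → ℝ} (hF : Good F) (hG : Good G) :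
    Good (fun x ξ => F x ξ + G x ξ) := by
  intro a b ha hb
  obtain ⟨Φ, hΦ⟩ := hF a b ha hb
  obtain ⟨Ψ, hΨ⟩ := hG a b ha hb
  exact ⟨Φ + Ψ, fun x ξ => by rw [_root_.add_apply, hΦ, hΨ]; ring⟩

lemma Good.const_mul {F : En n → En n → ℝ} (hF : Good F) (c : ℝ) :
    Good (fun x ξ => c * F x ξ) := by
  intro a b ha hb
  obtain ⟨Φ, hΦ⟩ := hF a b ha hb
  exact ⟨c • Φ, fun x ξ => by rw [_root_.smul_apply, hΦ, smul_eq_mul]; ring⟩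

lemma Good.sub {F G : En n → En n → ℝ} (hF : Good F) (hG : Good G) :
    Good (fun x ξ => F x ξ - G x ξ) :=
  (hF.add (hG.const_mul (-1))).congr fun x ξ _ => by ring

lemma good_zero : Good (fun _ _ : En n => (0 : ℝ)) := fun _ _ _ _ => ⟨0, fun _ _ => by simp⟩

lemma good_sum {ι : Type} (s : Finset ι) {F : ι → En n → En n → ℝ} (h : ∀ i ∈ s, Good (F i)) :
    Good (fun x ξ => ∑ i ∈ s, F i x ξ) := by
  classical
  induction s using Finset.induction_on with
  | empty => simpa using good_zero
  | insert i s hi ih =>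
    simp only [Finset.sum_insert hi]
    exact (h i (by simp)).add (ih fun j hj => h j (by simp [hj]))

lemma Good.mul_xi {F : En n → En n → ℝ} (hF : Good F) {h : En n → ℝ}
    (hh : ∀ ξ, ξ ≠ 0 → ContDiffAt ℝ ∞ h ξ) : Good (fun x ξ => h ξ * F x ξ) := by
  intro a b ha hb
  obtain ⟨Φ, hΦ⟩ := hF _ b (ha.mul hh) hb
  exact ⟨Φ, fun x ξ => by rw [hΦ]; ring⟩

lemma Good.mul_ip {F : En n → En n → ℝ} (hF : Good F) (k : ℕ) :
    Good (fun x ξ => (⟪x, ξ⟫ : ℝ) ^ k * F x ξ) := by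
  intro a b ha hb
  have hb' : CutB (fun s => b s * s ^ k) := ⟨hb.1.mul (contDiff_id.pow k), hb.2.mul_right⟩
  obtain ⟨Φ, hΦ⟩ := hF _ _ ha hb'
  exact ⟨Φ, fun x ξ => by rw [hΦ]; ring⟩

lemma Good.differentiableAt {F : En n → En n → ℝ} (hF : Good F) (x : En n) {ξ : En n}
    (hξ : ξ ≠ 0) : DifferentiableAt ℝ (fun p : En n × En n => F p.1 p.2) (x, ξ) := by
  obtain ⟨a, ha, ha1⟩ := exists_cutA (isCompact_singleton (x := ξ)) (by simpa using hξ.symm)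
  obtain ⟨b, hb, hb1⟩ := exists_cutB (⟪x, ξ⟫ : ℝ)
  obtain ⟨Φ, hΦ⟩ := hF a b ha hb
  rw [nhdsSet_singleton] at ha1
  have c1 : Tendsto (fun p : En n × En n => p.2) (𝓝 (x, ξ)) (𝓝 ξ) :=
    continuous_snd.tendsto (x, ξ)
  have c2 : Tendsto (fun p : En n × En n => (⟪p.1, p.2⟫ : ℝ)) (𝓝 (x, ξ)) (𝓝 ⟪x, ξ⟫) :=
    (continuous_fst.inner continuous_snd).tendsto (x, ξ)
  refine (Φ.differentiableAt (x := (x, ξ))).congr_of_eventuallyEq ?_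
  filter_upwards [c1.eventually ha1, c2.eventually hb1] with p h1 h2
  rw [← Prod.mk.eta (p := p), hΦ]
  simp [h1, h2]

lemma Good.fderiv {F : En n → En n → ℝ} (hF : Good F) (v : En n × En n) :
    Good (fun x ξ => fderiv ℝ (fun p : En n × En n => F p.1 p.2) (x, ξ) v) := by
  intro a b ha hb
  obtain ⟨Φ, hΦ⟩ := hF a b ha hb
  obtain ⟨Φ1, hΦ1⟩ := hF _ b (ha.fderiv v.2) hb
  obtain ⟨Φ2, hΦ2⟩ := hF a _ ha hb.deriv
  have hw : (fun p : En n × En n => (⟪p.1, v.2⟫ : ℝ) + ⟪v.1, p.2⟫).HasTemperateGrowth :=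
    (htg_inner htg_fst (.const _)).add (htg_inner (.const _) htg_snd)
  refine ⟨SchwartzMap.evalCLM ℝ _ _ v (SchwartzMap.fderivCLM ℝ _ _ Φ) - Φ1 -
    SchwartzMap.smulLeftCLM ℝ (fun p : En n × En n => (⟪p.1, v.2⟫ : ℝ) + ⟪v.1, p.2⟫) Φ2,
    fun x ξ => ?_⟩
  rw [_root_.sub_apply, _root_.sub_apply, SchwartzMap.evalCLM_apply_apply,
    SchwartzMap.fderivCLM_apply, SchwartzMap.smulLeftCLM_apply_apply hw, hΦ1, hΦ2]
  have hΦe : (Φ : En n × En n → ℝ) = fun p => a p.2 * b ⟪p.1, p.2⟫ * F p.1 p.2 :=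
    funext fun p => hΦ p.1 p.2
  by_cases hξ : ξ = 0
  · subst hξ
    have h0 : (Φ : En n × En n → ℝ) =ᶠ[𝓝 (x, 0)] fun _ => 0 := by
      have c1 : Tendsto (fun p : En n × En n => p.2) (𝓝 (x, 0)) (𝓝 0) :=
        continuous_snd.tendsto (x, (0 : En n))
      filter_upwards [c1.eventually (notMem_tsupport_iff_eventuallyEq.1 ha.2.2)] with p hp
      rw [hΦe]; simp [hp]
    rw [h0.fderiv_eq]
    have := (ha.fderiv v.2).zero
    simp [this, ha.zero]
  · have hFd := (hF.differentiableAt x hξ).hasFDerivAt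
    have h2 : HasFDerivAt (fun p : En n × En n => p.2) (ContinuousLinearMap.snd ℝ (En n) (En n))
      (x, ξ) := hasFDerivAt_snd
    have h1 : HasFDerivAt (fun p : En n × En n => p.1) (ContinuousLinearMap.fst ℝ (En n) (En n))
      (x, ξ) := hasFDerivAt_fst
    have hA : HasFDerivAt (fun p : En n × En n => a p.2) _ (x, ξ) :=
      HasFDerivAt.comp (x, ξ) ((ha.1.differentiable (by simp)) ξ).hasFDerivAt h2
    have hB : HasFDerivAt (fun p : En n × En n => b ⟪p.1, p.2⟫) _ (x, ξ) :=
      HasDerivAt.comp_hasFDerivAt (x, ξ) ((hb.1.differentiable (by simp)) _).hasDerivAt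
        (h1.inner ℝ h2)
    have hT := ((hA.mul hB).mul hFd).fderiv
    change _root_.fderiv ℝ (fun p : En n × En n => a p.2 * b ⟪p.1, p.2⟫ * F p.1 p.2) (x, ξ) = _ at hT
    rw [hΦe, hT]
    simp
    ring

lemma Good.pdx {F : En n → En n → ℝ} (hF : Good F) (j : Fin n) : Good (pdx j F) := by
  refine (hF.fderiv (EuclideanSpace.single j 1, 0)).congr fun x ξ hξ => ?_
  have h1 : HasFDerivAt (fun y : En n => (y, ξ)) (ContinuousLinearMap.inl ℝ (En n) (En n)) x :=
    hasFDerivAt_prodMk_left x ξ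
  have := (HasFDerivAt.comp x (hF.differentiableAt x hξ).hasFDerivAt h1).fderiv
  simp only [_root_.pdx]
  change _root_.fderiv ℝ ((fun p : En n × En n => F p.1 p.2) ∘ fun y => (y, ξ)) x _ = _
  rw [this]
  simp

lemma Good.pdxi {F : En n → En n → ℝ} (hF : Good F) (j : Fin n) : Good (pdxi j F) := by
  refine (hF.fderiv (0, EuclideanSpace.single j 1)).congr fun x ξ hξ => ?_
  have h1 : HasFDerivAt (fun y : En n => (x, y)) (ContinuousLinearMap.inr ℝ (En n) (En n)) ξ :=
    hasFDerivAt_prodMk_right x ξ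
  have := (HasFDerivAt.comp ξ (hF.differentiableAt x hξ).hasFDerivAt h1).fderiv
  simp only [_root_.pdxi]
  change _root_.fderiv ℝ ((fun p : En n × En n => F p.1 p.2) ∘ fun y => (x, y)) ξ _ = _
  rw [this]
  simp

lemma Good.johnIter {F : En n → En n → ℝ} (hF : Good F) (l : List (Fin n × Fin n)) :
    Good (johnIter l F) := by
  induction l with
  | nil => exact hF
  | cons ij l ih => exact ((ih.pdxi ij.2).pdx ij.1).sub ((ih.pdxi ij.1).pdx ij.2)

lemma Good.schwartz {F : En n → En n → ℝ} (hF : Good F) : IsSchwartzOnTS F := by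
  obtain ⟨a, ha, ha1⟩ := exists_cutA (isCompact_sphere (0 : En n) 1) (by simp)
  obtain ⟨b, hb, hb1⟩ := exists_cutB 0
  obtain ⟨Φ, hΦ⟩ := hF a b ha hb
  refine ⟨Φ, fun x ξ h1 h2 => ?_⟩
  have h3 : a ξ = 1 := ha1.self_of_nhdsSet ξ (by simpa using h1)
  rw [hΦ, h2, h3, hb1.self_of_nhds]
  ring

lemma cut_bounds {a : En n → ℝ} {b : ℝ → ℝ} (ha : CutA a) (hb : CutB b) :
    ∃ δ R B : ℝ, 0 < δ ∧ 0 < R ∧ 0 ≤ B ∧ (∀ ξ ∈ tsupport a, δ ≤ ‖ξ‖ ∧ ‖ξ‖ ≤ R) ∧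
      ∀ s ∈ tsupport b, |s| ≤ B := by
  obtain ⟨R, hR0, hR⟩ := ha.2.1.isBounded.exists_pos_norm_le
  obtain ⟨B, hB0, hB⟩ := hb.2.isBounded.exists_pos_norm_le
  obtain ⟨δ, hδ, hd⟩ := Metric.isOpen_iff.1 (isClosed_tsupport a).isOpen_compl 0 ha.2.2
  refine ⟨δ, R, B, hδ, hR0, hB0.le, fun ξ hξ => ⟨?_, hR ξ hξ⟩, hB⟩
  by_contra h
  exact hd (by simpa using h) hξ

lemma good_proj (Ψ : 𝓢(En n × En n, ℝ)) :
    Good (fun x ξ => Ψ (x - ((⟪x, ξ⟫ : ℝ) / ‖ξ‖ ^ 2) • ξ, ‖ξ‖⁻¹ • ξ)) := by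
  intro a b ha hb
  obtain ⟨c, hc, hc1⟩ := exists_cutA ha.2.1.isCompact ha.2.2
  obtain ⟨δ, R, B, hδ, hR, hB, hξ, hs⟩ := cut_bounds ha hb
  have hρ1 : CutA (fun ξ : En n => c ξ * ‖ξ‖⁻¹) :=
    hc.mul fun ξ h => (contDiffAt_norm ℝ h).inv (by simpa using h)
  have hρ2 : CutA (fun ξ : En n => c ξ * (‖ξ‖ ^ 2)⁻¹) :=
    hc.mul fun ξ h => ((contDiffAt_norm ℝ h).pow 2).inv (by simpa using h)
  have hip : (fun p : En n × En n => (⟪p.1, p.2⟫ : ℝ)).HasTemperateGrowth :=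
    htg_inner htg_fst htg_snd
  have hθ : (fun p : En n × En n => (p.1 - ((⟪p.1, p.2⟫ : ℝ) * (c p.2 * (‖p.2‖ ^ 2)⁻¹)) • p.2,
      (c p.2 * ‖p.2‖⁻¹) • p.2)).HasTemperateGrowth := by
    have k2 : (fun p : En n × En n => c p.2 * (‖p.2‖ ^ 2)⁻¹).HasTemperateGrowth :=
      (htg_compact hρ2.1 hρ2.2.1).comp htg_snd
    have k1 : (fun p : En n × En n => c p.2 * ‖p.2‖⁻¹).HasTemperateGrowth :=
      (htg_compact hρ1.1 hρ1.2.1).comp htg_snd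
    exact htg_prodMk (htg_fst.sub ((hip.mul k2).smul htg_snd)) (k1.fun_smul htg_snd)
  have hcut : (fun p : En n × En n => a p.2 * b ⟪p.1, p.2⟫).HasTemperateGrowth :=
    .mul ((htg_compact ha.1 ha.2.1).comp htg_snd) ((htg_compact hb.1 hb.2).comp hip)
  have hupp : ∀ p ∈ tsupport (fun p : En n × En n => a p.2 * b ⟪p.1, p.2⟫), ‖p‖ ≤
      (1 + B * (δ ^ 2)⁻¹ * R + R) * (1 +
        ‖(p.1 - ((⟪p.1, p.2⟫ : ℝ) * (c p.2 * (‖p.2‖ ^ 2)⁻¹)) • p.2, (c p.2 * ‖p.2‖⁻¹) • p.2)‖) := by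
    rintro ⟨x, ξ⟩ hx
    have hsub : tsupport (fun p : En n × En n => a p.2 * b ⟪p.1, p.2⟫) ⊆
        {p | p.2 ∈ tsupport a ∧ (⟪p.1, p.2⟫ : ℝ) ∈ tsupport b} := by
      refine closure_minimal (fun p hp => ?_) ?_
      · have hp' : a p.2 * b ⟪p.1, p.2⟫ ≠ 0 := hp
        exact ⟨subset_tsupport _ (left_ne_zero_of_mul hp'),
          subset_tsupport _ (right_ne_zero_of_mul hp')⟩
      · exact ((isClosed_tsupport a).preimage continuous_snd).inter
          ((isClosed_tsupport b).preimage (continuous_fst.inner continuous_snd))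
    obtain ⟨h1, h2⟩ := hsub hx
    obtain ⟨h3, h4⟩ := hξ ξ h1
    have h5 := hs _ h2
    simp only at h1 h2 h3 h4 h5
    have hc' : c ξ = 1 := hc1.self_of_nhdsSet ξ h1
    simp only [hc', one_mul]
    set w := x - ((⟪x, ξ⟫ : ℝ) * (‖ξ‖ ^ 2)⁻¹) • ξ with hw
    set W := ‖(w, ‖ξ‖⁻¹ • ξ)‖
    have hwW : ‖w‖ ≤ W := norm_fst_le (w, ‖ξ‖⁻¹ • ξ)
    have hW0 : 0 ≤ W := norm_nonneg _
    have hx1 : ‖x‖ ≤ ‖w‖ + B * (δ ^ 2)⁻¹ * R := by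
      have : x = w + ((⟪x, ξ⟫ : ℝ) * (‖ξ‖ ^ 2)⁻¹) • ξ := by rw [hw]; abel
      calc ‖x‖ ≤ ‖w‖ + ‖((⟪x, ξ⟫ : ℝ) * (‖ξ‖ ^ 2)⁻¹) • ξ‖ := by
            conv_lhs => rw [this]
            exact norm_add_le _ _
        _ = ‖w‖ + |(⟪x, ξ⟫ : ℝ)| * (‖ξ‖ ^ 2)⁻¹ * ‖ξ‖ := by
            rw [norm_smul, norm_mul, norm_inv, norm_pow, norm_norm, Real.norm_eq_abs]
        _ ≤ _ := by gcongr
    have hK : 0 ≤ B * (δ ^ 2)⁻¹ * R := by positivity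
    generalize B * (δ ^ 2)⁻¹ * R = K at *
    refine max_le ?_ ?_
    · change ‖x‖ ≤ _; nlinarith [mul_nonneg hK hW0, mul_nonneg hR.le hW0]
    · change ‖ξ‖ ≤ _; nlinarith [mul_nonneg hK hW0, mul_nonneg hR.le hW0]
  obtain ⟨Φ, hΦ⟩ := exists_cutoff_comp Ψ hθ hcut (1 + B * (δ ^ 2)⁻¹ * R + R) hupp
  refine ⟨Φ, fun x ξ => ?_⟩
  rw [hΦ]
  by_cases h : ξ ∈ tsupport a
  · have : c ξ = 1 := hc1.self_of_nhdsSet ξ h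
    simp only [this, one_mul, div_eq_mul_inv]
  · simp [image_eq_zero_of_notMem_tsupport h]

lemma good_momRT {m : ℕ} (q : ℕ) (f : (Fin m → Fin n) → En n → ℝ) (hf : IsSchwartzField f) :
    Good (momRT q f) := by
  intro a b ha hb
  choose f' hf' using hf
  obtain ⟨δ, R, B, hδ, hR, hB, hξ, hs⟩ := cut_bounds ha hb
  have e1 : (fun p : (En n × En n) × ℝ => p.1.1).HasTemperateGrowth := htg_fst.comp htg_fst
  have e2 : (fun p : (En n × En n) × ℝ => p.1.2).HasTemperateGrowth := htg_snd.comp htg_fst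
  have hip : (fun p : (En n × En n) × ℝ => (⟪p.1.1, p.1.2⟫ : ℝ)).HasTemperateGrowth :=
    htg_inner e1 e2
  have hθ : (fun p : (En n × En n) × ℝ => p.1.1 + p.2 • p.1.2).HasTemperateGrowth :=
    e1.add (htg_snd.smul e2)
  have key : ∀ i : Fin m → Fin n, ∃ Φ : 𝓢((En n × En n) × ℝ, ℝ), ∀ p,
      Φ p = (a p.1.2 * b ⟪p.1.1, p.1.2⟫ * ((∏ r, p.1.2 (i r)) * p.2 ^ q)) *
        f' i (p.1.1 + p.2 • p.1.2) := by
    intro i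
    have hprod : ContDiff ℝ ∞ (fun ξ : En n => ∏ r, ξ (i r)) := by fun_prop
    have ha' : CutA (fun ξ => a ξ * ∏ r, ξ (i r)) := ha.mul fun ξ _ => hprod.contDiffAt
    have hcut : (fun p : (En n × En n) × ℝ =>
        a p.1.2 * b ⟪p.1.1, p.1.2⟫ * ((∏ r, p.1.2 (i r)) * p.2 ^ q)).HasTemperateGrowth := by
      have := (((htg_compact ha'.1 ha'.2.1).comp e2).mul ((htg_compact hb.1 hb.2).comp hip)).mul
        ((htg_snd (A := En n × En n) (B := ℝ)).pow q)
      refine (congrArg Function.HasTemperateGrowth (funext fun p => ?_)).mp this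
      simp only [Pi.mul_apply, Pi.pow_apply, Function.comp_apply]
      ring
    refine exists_cutoff_comp (f' i) hθ hcut
      (R + (R + B) / δ ^ 2 + (1 + (R + B) / δ ^ 2 * R)) ?_
    rintro ⟨⟨x, ξ⟩, t⟩ hx
    have hsub : tsupport (fun p : (En n × En n) × ℝ =>
        a p.1.2 * b ⟪p.1.1, p.1.2⟫ * ((∏ r, p.1.2 (i r)) * p.2 ^ q)) ⊆
        {p | p.1.2 ∈ tsupport a ∧ (⟪p.1.1, p.1.2⟫ : ℝ) ∈ tsupport b} := by
      refine closure_minimal (fun p hp => ?_) ?_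
      · have hp' : a p.1.2 * b ⟪p.1.1, p.1.2⟫ ≠ 0 := left_ne_zero_of_mul hp
        exact ⟨subset_tsupport _ (left_ne_zero_of_mul hp'),
          subset_tsupport _ (right_ne_zero_of_mul hp')⟩
      · exact ((isClosed_tsupport a).preimage (continuous_snd.comp continuous_fst)).inter
          ((isClosed_tsupport b).preimage ((continuous_fst.comp continuous_fst).inner
            (continuous_snd.comp continuous_fst)))
    obtain ⟨h1, h2⟩ := hsub hx
    obtain ⟨h3, h4⟩ := hξ ξ h1
    have h5 := hs _ h2
    simp only at h1 h2 h3 h4 h5 ⊢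
    set w := x + t • ξ with hw
    set W := ‖w‖
    have hW0 : 0 ≤ W := norm_nonneg _
    have hT0 : 0 ≤ (R + B) / δ ^ 2 := by positivity
    have ht : |t| ≤ (R + B) / δ ^ 2 * (1 + W) := by
      rw [div_mul_eq_mul_div, le_div_iff₀ (by positivity)]
      have e : t * ‖ξ‖ ^ 2 = ⟪w, ξ⟫ - ⟪x, ξ⟫ := by
        rw [hw, inner_add_left, real_inner_smul_left, real_inner_self_eq_norm_sq]; ring
      have e' : |t| * ‖ξ‖ ^ 2 = |(⟪w, ξ⟫ : ℝ) - ⟪x, ξ⟫| := by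
        rw [← e, abs_mul, abs_of_nonneg (by positivity : 0 ≤ ‖ξ‖ ^ 2)]
      calc |t| * δ ^ 2 ≤ |t| * ‖ξ‖ ^ 2 := by gcongr
        _ ≤ |(⟪w, ξ⟫ : ℝ)| + |(⟪x, ξ⟫ : ℝ)| := by rw [e']; exact abs_sub _ _
        _ ≤ W * R + B := by
          gcongr
          exact (abs_real_inner_le_norm _ _).trans (by gcongr)
        _ ≤ _ := by nlinarith [mul_nonneg hB hW0]
    have hxx : ‖x‖ ≤ W + |t| * R := by
      have : x = w - t • ξ := by rw [hw]; abel
      calc ‖x‖ ≤ ‖w‖ + ‖t • ξ‖ := by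
            conv_lhs => rw [this]
            exact norm_sub_le _ _
        _ ≤ _ := by rw [norm_smul, Real.norm_eq_abs]; gcongr
    have hxx2 : ‖x‖ ≤ W + (R + B) / δ ^ 2 * (1 + W) * R := hxx.trans (by gcongr)
    generalize (R + B) / δ ^ 2 = T at *
    have q1 := mul_nonneg hR.le hW0
    have q2 := mul_nonneg hT0 hW0
    have q3 := mul_nonneg hT0 hR.le
    have q4 := mul_nonneg q3 hW0
    refine max_le (max_le ?_ ?_) ?_
    · change ‖x‖ ≤ _; nlinarith
    · change ‖ξ‖ ≤ _; nlinarith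
    · change |t| ≤ _; nlinarith
  choose Φ hΦ using key
  refine ⟨partInt (∑ i, Φ i), fun x ξ => ?_⟩
  change (∫ t : ℝ, (∑ i, Φ i) ((x, ξ), t)) = _
  rw [momRT, ← integral_const_mul]
  refine integral_congr_ae (Eventually.of_forall fun t => ?_)
  simp only [_root_.sum_apply, hΦ, Finset.mul_sum, ← hf']
  refine Finset.sum_congr rfl fun i _ => ?_
  ring

end GoodClass

/-- under the same hypotheses as for `χ^ℓ` (statement 15), the
restriction to `TSⁿ⁻¹` of any `(m−ℓ+1)`-fold iterated John operator applied to
`χ^ℓ` belongs to `𝒮(TSⁿ⁻¹)`. -/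
theorem john_of_chi_restricts_to_schwartz
    (n m k ℓ : ℕ) (hℓ : ℓ ≤ k) (hkm : k ≤ m)
    (φ : ℕ → En n → En n → ℝ) (hφ : ∀ r, r ≤ k → IsSchwartzOnTS (φ r))
    (ψ : ℕ → En n → En n → ℝ)
    (hψ : ∀ p, p ≤ ℓ → ∀ x ξ : En n, ξ ≠ 0 →
      ψ p x ξ = ‖ξ‖ ^ ((m : ℤ) - 2 * p - 1) *
        ∑ r ∈ Finset.range (p + 1),
          (-1 : ℝ) ^ (p - r) * (p.choose r) * ‖ξ‖ ^ r * (⟪ξ, x⟫ : ℝ) ^ (p - r) *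
            φ r (x - ((⟪x, ξ⟫ : ℝ) / ‖ξ‖ ^ 2) • ξ) (‖ξ‖⁻¹ • ξ))
    (g : (s : ℕ) → (Fin (m - s) → Fin n) → En n → ℝ)
    (hg : ∀ s, s < ℓ → IsSchwartzField (g s) ∧ IsSymField (g s))
    (hrel : ∀ p, p < ℓ → ∀ x ξ : En n, ξ ≠ 0 →
      ψ p x ξ = ∑ s ∈ Finset.range (p + 1),
        (-1 : ℝ) ^ s * (p.choose s) * (s.factorial) * momRT (p - s) (g s) x ξ)
    (χ : En n → En n → ℝ)
    (hχ : ∀ x ξ : En n, χ x ξ = ((-1 : ℝ) ^ ℓ / (ℓ.factorial : ℝ)) *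
      (ψ ℓ x ξ - ∑ s ∈ Finset.range ℓ,
        (-1 : ℝ) ^ s * (ℓ.choose s) * (s.factorial) * momRT (ℓ - s) (g s) x ξ)) :
    ∀ idx jdx : Fin (m - ℓ + 1) → Fin n,
      IsSchwartzOnTS
        (johnIter ((List.finRange (m - ℓ + 1)).map (fun s => (idx s, jdx s))) χ) := by
  intro idx jdx
  refine Good.schwartz (Good.johnIter ?_ _)
  have hψg : Good (ψ ℓ) := by
    have hterm : ∀ r ∈ Finset.range (ℓ + 1), Good (fun x ξ : En n =>
        ‖ξ‖ ^ ((m : ℤ) - 2 * ℓ - 1) * (((-1 : ℝ) ^ (ℓ - r) * (ℓ.choose r)) * (‖ξ‖ ^ r *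
          ((⟪x, ξ⟫ : ℝ) ^ (ℓ - r) *
            φ r (x - ((⟪x, ξ⟫ : ℝ) / ‖ξ‖ ^ 2) • ξ) (‖ξ‖⁻¹ • ξ))))) := by
      intro r hr
      obtain ⟨Ψ, hΨ⟩ := hφ r (by have := Finset.mem_range.1 hr; omega)
      have h0 : Good (fun x ξ : En n =>
          φ r (x - ((⟪x, ξ⟫ : ℝ) / ‖ξ‖ ^ 2) • ξ) (‖ξ‖⁻¹ • ξ)) := by
        refine (good_proj Ψ).congr fun x ξ hξ => ?_
        have hn : ‖ξ‖ ≠ 0 := norm_ne_zero_iff.2 hξ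
        apply hΨ
        · rw [norm_smul, norm_inv, norm_norm, inv_mul_cancel₀ hn]
        · rw [inner_smul_right, inner_sub_left, real_inner_smul_left, real_inner_self_eq_norm_sq]
          field_simp
          simp
      refine Good.mul_xi (Good.const_mul (Good.mul_xi (h0.mul_ip _)
        (h := fun ξ => ‖ξ‖ ^ r) fun ξ hξ => ?_) _)
        (h := fun ξ => ‖ξ‖ ^ ((m : ℤ) - 2 * ℓ - 1)) fun ξ hξ => ?_
      · exact (contDiffAt_norm ℝ hξ).pow r
      · have hn : ‖ξ‖ ≠ 0 := norm_ne_zero_iff.2 hξ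
        generalize (m : ℤ) - 2 * ℓ - 1 = z
        obtain ⟨k, rfl | rfl⟩ := z.eq_nat_or_neg
        · simpa using (contDiffAt_norm ℝ hξ).pow k
        · simp only [zpow_neg, zpow_natCast]
          exact ((contDiffAt_norm ℝ hξ).pow k).inv (pow_ne_zero k hn)
    refine (good_sum _ hterm).congr fun x ξ hξ => ?_
    rw [hψ ℓ le_rfl x ξ hξ, Finset.mul_sum]
    refine Finset.sum_congr rfl fun r _ => ?_
    rw [real_inner_comm x ξ]
    ring
  have hsum : Good (fun x ξ : En n => ∑ s ∈ Finset.range ℓ,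
      (-1 : ℝ) ^ s * (ℓ.choose s) * (s.factorial) * momRT (ℓ - s) (g s) x ξ) :=
    good_sum _ fun s hs =>
      (good_momRT (ℓ - s) (g s) (hg s (Finset.mem_range.1 hs)).1).const_mul _
  exact ((hψg.sub hsum).const_mul _).congr fun x ξ _ => hχ x ξ
end
end
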